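/- arXiv:0804.0274 — 7 statements merged into one kernel-verified Lean document; each statement's English description precedes it below -/
import Mathlib

section
/- Let τ_A and τ be twice continuously differentiable complex-valued functions of (x,y) on an open subset Ω of ℂ², let p, E ∈ ℂ, and on the set where τ ≠ 0 define u := −2(τ_{xx}τ − τ_x²)/τ² (i.e., u = −2∂_x² ln τ) and ψ := (τ_A/τ)e^{px+Ey}. Then at every point of Ω where τ ≠ 0 one has e^{−px−Ey} τ² (∂_yψ − ∂_x²ψ + uψ) = ((D_y+E)−(D_x+p)²)τ_A·τ. In particular, on any open subset where τ is nowhere zero, ψ satisfies the auxiliary linear equation (∂_y − ∂_x² + u)ψ = 0 if and only if the Hirota bilinear equation ((D_y+E)−(D_x+p)²)τ_A·τ = 0 holds there. -/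
/-- Partial derivative in the first (x) variable of a function on ℂ². -/
noncomputable def pdx (f : ℂ × ℂ → ℂ) : ℂ × ℂ → ℂ :=
  fun q => deriv (fun x => f (x, q.2)) q.1

/-- Partial derivative in the second (y) variable of a function on ℂ². -/
noncomputable def pdy (f : ℂ × ℂ → ℂ) : ℂ × ℂ → ℂ :=
  fun q => deriv (fun y => f (q.1, y)) q.2

/-- Hirota bilinear operator `D_x f·g = f_x g − f g_x`. -/
noncomputable def Dx (f g : ℂ × ℂ → ℂ) : ℂ × ℂ → ℂ :=
  fun q => pdx f q * g q - f q * pdx g q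

/-- Hirota bilinear operator `D_y f·g = f_y g − f g_y`. -/
noncomputable def Dy (f g : ℂ × ℂ → ℂ) : ℂ × ℂ → ℂ :=
  fun q => pdy f q * g q - f q * pdy g q

/-- Hirota bilinear operator `D_x² f·g = f_xx g − 2 f_x g_x + f g_xx`. -/
noncomputable def Dx2 (f g : ℂ × ℂ → ℂ) : ℂ × ℂ → ℂ :=
  fun q => pdx (pdx f) q * g q - 2 * pdx f q * pdx g q + f q * pdx (pdx g) q

/-- The Hirota bilinear operator `((D_y+E)−(D_x+p)²) f·g
  = D_y f·g + E f g − D_x² f·g − 2p D_x f·g − p² f g`. -/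
noncomputable def HirotaL (p E : ℂ) (f g : ℂ × ℂ → ℂ) : ℂ × ℂ → ℂ :=
  fun q => Dy f g q + E * f q * g q - Dx2 f g q - 2 * p * Dx f g q - p ^ 2 * f q * g q

/-- The potential `u = −2 ∂_x² ln τ = −2(τ_xx τ − τ_x²)/τ²`. -/
noncomputable def uOf (τ : ℂ × ℂ → ℂ) : ℂ × ℂ → ℂ :=
  fun q => -2 * (pdx (pdx τ) q * τ q - (pdx τ q) ^ 2) / (τ q) ^ 2

/-- The wave function `ψ = (τ_A/τ) e^{px+Ey}`. -/
noncomputable def psiOf (p E : ℂ) (τA τ : ℂ × ℂ → ℂ) : ℂ × ℂ → ℂ :=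
  fun q => (τA q / τ q) * Complex.exp (p * q.1 + E * q.2)

/-- Slices in the first variable of a holomorphic function are analytic. -/
theorem analyticAt_slice_fst {f : ℂ × ℂ → ℂ} {q : ℂ × ℂ} (hf : ContDiffAt ℂ 2 f q) :
    AnalyticAt ℂ (fun x => f (x, q.2)) q.1 := by
  have h : ContDiffAt ℂ 2 (fun x => f (x, q.2)) q.1 :=
    ContDiffAt.comp (g := f) (f := fun x : ℂ => (x, q.2)) q.1 hf (by fun_prop)
  rw [Complex.analyticAt_iff_eventually_differentiableAt]
  filter_upwards [h.eventually (by norm_num)] with x hx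
  exact hx.differentiableAt (by norm_num)

/-- Slices in the second variable of a `C²` function are differentiable, with derivative `pdy`. -/
theorem hasDerivAt_slice_snd {f : ℂ × ℂ → ℂ} {q : ℂ × ℂ} (hf : ContDiffAt ℂ 2 f q) :
    HasDerivAt (fun y => f (q.1, y)) (pdy f q) q.2 := by
  have h : ContDiffAt ℂ 2 (fun y => f (q.1, y)) q.2 :=
    ContDiffAt.comp (g := f) (f := fun y : ℂ => (q.1, y)) q.2 hf (by fun_prop)
  exact (h.differentiableAt (by norm_num)).hasDerivAt

/-- First derivative of `(a / b) e^{kx + c}`. -/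
theorem hasDerivAt_div_mul_exp {a b : ℂ → ℂ} {a' b' x : ℂ} (k c : ℂ)
    (ha : HasDerivAt a a' x) (hb : HasDerivAt b b' x) (h0 : b x ≠ 0) :
    HasDerivAt (fun z => a z / b z * Complex.exp (k * z + c))
      (((a' * b x - a x * b') / b x ^ 2 + k * (a x / b x)) * Complex.exp (k * x + c)) x := by
  have he : HasDerivAt (fun z => Complex.exp (k * z + c)) (Complex.exp (k * x + c) * (k * 1)) x :=
    (((hasDerivAt_id' x).const_mul k).add_const c).cexp
  exact ((ha.fun_div hb h0).fun_mul he).congr_deriv (by ring)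

/-- Second derivative of `(a / b) e^{kx + c}`. -/
theorem deriv_deriv_div_mul_exp {a b : ℂ → ℂ} {x : ℂ} (k c : ℂ)
    (ha : AnalyticAt ℂ a x) (hb : AnalyticAt ℂ b x) (h0 : b x ≠ 0) :
    deriv (deriv fun z => a z / b z * Complex.exp (k * z + c)) x =
      ((deriv (deriv a) x * b x - a x * deriv (deriv b) x) / b x ^ 2
        - 2 * deriv b x * (deriv a x * b x - a x * deriv b x) / b x ^ 3
        + 2 * k * ((deriv a x * b x - a x * deriv b x) / b x ^ 2)
        + k ^ 2 * (a x / b x)) * Complex.exp (k * x + c) := by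
  have hev : (deriv fun z => a z / b z * Complex.exp (k * z + c)) =ᶠ[nhds x] fun z =>
      ((deriv a z * b z - a z * deriv b z) + k * (a z * b z)) / b z ^ 2
        * Complex.exp (k * z + c) := by
    filter_upwards [ha.eventually_analyticAt, hb.eventually_analyticAt,
      hb.continuousAt.eventually_ne h0] with z hza hzb hz
    rw [(hasDerivAt_div_mul_exp k c hza.differentiableAt.hasDerivAt
      hzb.differentiableAt.hasDerivAt hz).deriv]
    field_simp
  have ha₁ := ha.differentiableAt.hasDerivAt
  have hb₁ := hb.differentiableAt.hasDerivAt
  have ha₂ := ha.deriv.differentiableAt.hasDerivAt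
  have hb₂ := hb.deriv.differentiableAt.hasDerivAt
  rw [hev.deriv_eq, (hasDerivAt_div_mul_exp k c
    (((ha₂.fun_mul hb₁).fun_sub (ha₁.fun_mul hb₂)).fun_add ((ha₁.fun_mul hb₁).const_mul k))
    (hb₁.fun_pow 2) (pow_ne_zero 2 h0)).deriv]
  field_simp
  push_cast
  ring

/-- The pointwise identity between the linear operator on `ψ` and the bilinear operator. -/
theorem exp_mul_sq_mul_psiOf_eq_HirotaL {τA τ : ℂ × ℂ → ℂ} {q : ℂ × ℂ} (p E : ℂ)
    (hA : ContDiffAt ℂ 2 τA q) (hτ : ContDiffAt ℂ 2 τ q) (h0 : τ q ≠ 0) :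
    Complex.exp (-(p * q.1) - E * q.2) * (τ q) ^ 2 *
        (pdy (psiOf p E τA τ) q - pdx (pdx (psiOf p E τA τ)) q
          + uOf τ q * psiOf p E τA τ q)
      = HirotaL p E τA τ q := by
  have hy : pdy (psiOf p E τA τ) q =
      ((pdy τA q * τ q - τA q * pdy τ q) / τ q ^ 2 + E * (τA q / τ q))
        * Complex.exp (p * q.1 + E * q.2) := by
    have h := (hasDerivAt_div_mul_exp (a := fun y => τA (q.1, y)) (b := fun y => τ (q.1, y))
      E (p * q.1) (hasDerivAt_slice_snd hA)
      (hasDerivAt_slice_snd hτ) h0).deriv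
    simp only [add_comm _ (p * q.1)] at h
    exact h
  have hx : pdx (pdx (psiOf p E τA τ)) q =
      ((pdx (pdx τA) q * τ q - τA q * pdx (pdx τ) q) / τ q ^ 2
        - 2 * pdx τ q * (pdx τA q * τ q - τA q * pdx τ q) / τ q ^ 3
        + 2 * p * ((pdx τA q * τ q - τA q * pdx τ q) / τ q ^ 2)
        + p ^ 2 * (τA q / τ q)) * Complex.exp (p * q.1 + E * q.2) :=
    deriv_deriv_div_mul_exp (a := fun x => τA (x, q.2)) (b := fun x => τ (x, q.2)) p (E * q.2)
      (analyticAt_slice_fst hA) (analyticAt_slice_fst hτ) h0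
  have he : Complex.exp (-(p * q.1) - E * q.2) = (Complex.exp (p * q.1 + E * q.2))⁻¹ := by
    rw [← Complex.exp_neg]
    congr 1
    ring
  have hne := Complex.exp_ne_zero (p * q.1 + E * q.2)
  rw [hy, hx, he]
  simp only [HirotaL, Dx, Dy, Dx2, uOf, psiOf]
  generalize Complex.exp (p * q.1 + E * q.2) = e at hne ⊢
  field_simp
  ring

/-- `e^{−px−Ey} τ² (∂_yψ − ∂_x²ψ + uψ) = ((D_y+E)−(D_x+p)²)τ_A·τ`
wherever τ ≠ 0; in particular, on open subsets where τ is nowhere zero, the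
auxiliary linear equation for ψ is equivalent to the Hirota bilinear equation. -/
theorem stmt_2 (Ω : Set (ℂ × ℂ)) (hΩ : IsOpen Ω)
    (τA τ : ℂ × ℂ → ℂ)
    (hτA : ContDiffOn ℂ 2 τA Ω) (hτ : ContDiffOn ℂ 2 τ Ω)
    (p E : ℂ) :
    (∀ q ∈ Ω, τ q ≠ 0 →
      Complex.exp (-(p * q.1) - E * q.2) * (τ q) ^ 2 *
          (pdy (psiOf p E τA τ) q - pdx (pdx (psiOf p E τA τ)) q
            + uOf τ q * psiOf p E τA τ q)
        = HirotaL p E τA τ q) ∧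
    (∀ Ω' : Set (ℂ × ℂ), IsOpen Ω' → Ω' ⊆ Ω → (∀ q ∈ Ω', τ q ≠ 0) →
      ((∀ q ∈ Ω',
          pdy (psiOf p E τA τ) q - pdx (pdx (psiOf p E τA τ)) q
            + uOf τ q * psiOf p E τA τ q = 0)
        ↔ (∀ q ∈ Ω', HirotaL p E τA τ q = 0))) := by
  have key : ∀ q ∈ Ω, τ q ≠ 0 → _ := fun q hq h0 =>
    exp_mul_sq_mul_psiOf_eq_HirotaL p E (hτA.contDiffAt (hΩ.mem_nhds hq))
      (hτ.contDiffAt (hΩ.mem_nhds hq)) h0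
  refine ⟨key, fun Ω' _ hsub hne => forall₂_congr fun q hq => ?_⟩
  rw [← key q (hsub hq) (hne q hq), mul_eq_zero,
    or_iff_right (mul_ne_zero (Complex.exp_ne_zero _) (pow_ne_zero 2 (hne q hq)))]
end

section
/- Let D ⊆ ℂ be open, x₀ : D → ℂ holomorphic, y₀ ∈ D, and let φ, φ_A be holomorphic functions on a neighborhood of the point (x₀(y₀), y₀) in ℂ² with φ(x₀(y₀), y₀) ≠ 0 and φ_A(x₀(y₀), y₀) ≠ 0. Let a, b be nonnegative integers, let p, E ∈ ℂ, and set τ(x,y) := (x − x₀(y))^b φ(x,y) and τ_A(x,y) := (x − x₀(y))^a φ_A(x,y). If the Hirota bilinear equation ((D_y+E)−(D_x+p)²)τ_A·τ = 0 holds on a neighborhood of (x₀(y₀), y₀), then (a−b)² = a+b; equivalently, setting ν := a−b, one has a = ν(ν+1)/2 and b = ν(ν−1)/2. -/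
open Filter Topology in
/-- Cauchy estimate with a parameter: the `y`-derivative of a jointly holomorphic function exists and
is bounded along the horizontal slice through a point. -/
theorem exists_eventually_norm_deriv_snd_le {f : ℂ × ℂ → ℂ} {V : Set (ℂ × ℂ)} {c y₀ : ℂ}
    (hV : V ∈ 𝓝 (c, y₀)) (hf : DifferentiableOn ℂ f V) :
    ∃ C : ℝ, ∀ᶠ x in 𝓝 c, DifferentiableAt ℂ (fun y => f (x, y)) y₀ ∧
      ‖deriv (fun y => f (x, y)) y₀‖ ≤ C := by
  have hbound : ∀ᶠ q in 𝓝 (c, y₀), ‖f q‖ < ‖f (c, y₀)‖ + 1 :=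
    (hf.differentiableAt hV).continuousAt.norm.eventually_lt_const (lt_add_one _)
  obtain ⟨ε, hε, hball⟩ := Metric.eventually_nhds_iff_ball.1
    (hbound.and (hf.eventually_differentiableAt hV))
  refine ⟨(‖f (c, y₀)‖ + 1) / (ε / 2), ?_⟩
  filter_upwards [Metric.ball_mem_nhds c hε] with x hx
  have hmem : ∀ y ∈ Metric.closedBall y₀ (ε / 2), (x, y) ∈ Metric.ball (c, y₀) ε := by
    intro y hy
    rw [← ball_prod_same]
    exact ⟨hx, Metric.closedBall_subset_ball (half_lt_self hε) hy⟩
  have hdiff : ∀ y ∈ Metric.closedBall y₀ (ε / 2), DifferentiableAt ℂ (fun y => f (x, y)) y :=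
    fun y hy => (hball _ (hmem y hy)).2.comp y (by fun_prop)
  refine ⟨hdiff y₀ (Metric.mem_closedBall_self (half_pos hε).le), ?_⟩
  refine Complex.norm_deriv_le_of_forall_mem_sphere_norm_le (half_pos hε) ?_ ?_
  · exact DifferentiableOn.diffContOnCl_ball (U := Metric.closedBall y₀ (ε / 2))
      (fun y hy => (hdiff y hy).differentiableWithinAt) subset_rfl
  · exact fun y hy => (hball _ (hmem y (Metric.sphere_subset_closedBall hy))).1.le

/-- Derivative of `u ^ n * f`, with the power `u ^ n` factored out. -/
theorem deriv_pow_mul_of_ne_zero {u f : ℂ → ℂ} {x : ℂ} (n : ℕ) (hu : DifferentiableAt ℂ u x)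
    (hf : DifferentiableAt ℂ f x) (hx : u x ≠ 0) :
    deriv (fun z => u z ^ n * f z) x =
      u x ^ n * (n * deriv u x * f x / u x + deriv f x) := by
  rw [((hu.hasDerivAt.fun_pow n).fun_mul hf.hasDerivAt).deriv]
  rcases n with _ | n
  · simp
  · simp only [Nat.add_sub_cancel, pow_succ]
    field_simp

open Filter Topology in
/-- First two derivatives of `(x - c) ^ n * f x` off `c`, with the power factored out. -/
theorem eventually_deriv_sub_pow_mul {f : ℂ → ℂ} {c : ℂ} (n : ℕ) (hf : AnalyticAt ℂ f c) :
    ∀ᶠ x in 𝓝[≠] c,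
      deriv (fun z => (z - c) ^ n * f z) x =
        (x - c) ^ n * (n * f x / (x - c) + deriv f x) ∧
      deriv (deriv fun z => (z - c) ^ n * f z) x =
        (x - c) ^ n * (n * (n - 1) * f x / (x - c) ^ 2 + 2 * n * deriv f x / (x - c) +
          deriv (deriv f) x) := by
  have hfirst : ∀ᶠ x in 𝓝[≠] c, deriv (fun z => (z - c) ^ n * f z) x =
      (x - c) ^ n * (n * f x / (x - c) + deriv f x) := by
    filter_upwards [hf.eventually_analyticAt.filter_mono nhdsWithin_le_nhds,
      self_mem_nhdsWithin] with x hfx hx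
    rw [deriv_pow_mul_of_ne_zero (u := fun z => z - c) n (by fun_prop) hfx.differentiableAt
      (sub_ne_zero.2 hx)]
    simp
  filter_upwards [hfirst, eventually_eventually_nhdsWithin.2 hfirst,
    hf.eventually_analyticAt.filter_mono nhdsWithin_le_nhds, self_mem_nhdsWithin]
    with x hx1 hx2 hfx hx
  have hne : x - c ≠ 0 := sub_ne_zero.2 hx
  refine ⟨hx1, ?_⟩
  have hev : deriv (fun z => (z - c) ^ n * f z) =ᶠ[𝓝 x]
      fun z => (z - c) ^ n * (n * f z / (z - c) + deriv f z) := by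
    rwa [isOpen_compl_singleton.nhdsWithin_eq hx] at hx2
  have hd0 := hfx.differentiableAt
  have hd1 := hfx.deriv.differentiableAt
  have hsub : HasDerivAt (fun z => z - c) 1 x := (hasDerivAt_id x).sub_const c
  have hfac : HasDerivAt (fun z => n * f z / (z - c) + deriv f z)
      ((n * deriv f x * (x - c) - n * f x * 1) / (x - c) ^ 2 + deriv (deriv f) x) x :=
    ((hd0.hasDerivAt.const_mul (n : ℂ)).fun_div hsub hne).fun_add hd1.hasDerivAt
  rw [hev.deriv_eq,
    deriv_pow_mul_of_ne_zero (u := fun z => z - c) n (by fun_prop) hfac.differentiableAt hne,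
    hfac.deriv, hsub.deriv]
  field_simp
  ring

/-- forward direction of Lemma 2.1: if
`τ = (x − x₀(y))^b φ` and `τ_A = (x − x₀(y))^a φ_A`, with φ, φ_A holomorphic and
nonvanishing at (x₀(y₀), y₀), satisfy the Hirota bilinear equation
`((D_y+E)−(D_x+p)²)τ_A·τ = 0` on a neighborhood of (x₀(y₀), y₀), then
`(a−b)² = a+b`; equivalently, with ν := a−b, `a = ν(ν+1)/2` and `b = ν(ν−1)/2`. -/
theorem stmt_4 (D : Set ℂ) (hD : IsOpen D)
    (x₀ : ℂ → ℂ) (hx₀ : DifferentiableOn ℂ x₀ D)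
    (y₀ : ℂ) (hy₀ : y₀ ∈ D)
    (φ φA : ℂ × ℂ → ℂ)
    (V : Set (ℂ × ℂ)) (hV : V ∈ nhds ((x₀ y₀, y₀) : ℂ × ℂ))
    (hφ : DifferentiableOn ℂ φ V) (hφA : DifferentiableOn ℂ φA V)
    (hφ0 : φ (x₀ y₀, y₀) ≠ 0) (hφA0 : φA (x₀ y₀, y₀) ≠ 0)
    (a b : ℕ) (p E : ℂ)
    (W : Set (ℂ × ℂ)) (hW : W ∈ nhds ((x₀ y₀, y₀) : ℂ × ℂ))
    (heq : ∀ q ∈ W,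
      HirotaL p E (fun r => (r.1 - x₀ r.2) ^ a * φA r)
        (fun r => (r.1 - x₀ r.2) ^ b * φ r) q = 0) :
    ((a : ℤ) - (b : ℤ)) ^ 2 = (a : ℤ) + (b : ℤ) ∧
    2 * (a : ℤ) = ((a : ℤ) - (b : ℤ)) * (((a : ℤ) - (b : ℤ)) + 1) ∧
    2 * (b : ℤ) = ((a : ℤ) - (b : ℤ)) * (((a : ℤ) - (b : ℤ)) - 1) := by
  set c := x₀ y₀ with hc
  have hslice : ∀ ψ : ℂ × ℂ → ℂ, DifferentiableOn ℂ ψ V →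
      AnalyticAt ℂ (fun x => ψ (x, y₀)) c := by
    intro ψ hψ
    rw [Complex.analyticAt_iff_eventually_differentiableAt]
    have hcont : ContinuousAt (fun x : ℂ => (x, y₀)) c := by fun_prop
    filter_upwards [hcont.eventually (hψ.eventually_differentiableAt hV)] with x hx
    exact hx.comp x (by fun_prop)
  have hG := hslice φ hφ
  have hF := hslice φA hφA
  obtain ⟨CG, hCG⟩ := exists_eventually_norm_deriv_snd_le hV hφ
  obtain ⟨CF, hCF⟩ := exists_eventually_norm_deriv_snd_le hV hφA
  set G := fun x => φ (x, y₀) with hGdef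
  set F := fun x => φA (x, y₀) with hFdef
  set Gy := fun x => deriv (fun y => φ (x, y)) y₀ with hGy
  set Fy := fun x => deriv (fun y => φA (x, y)) y₀ with hFy
  set c' := deriv x₀ y₀ with hc'
  have hx₀d : DifferentiableAt ℂ x₀ y₀ := hx₀.differentiableAt (hD.mem_nhds hy₀)
  have hWx : ∀ᶠ x in nhds c, (x, y₀) ∈ W := by
    have hcont : ContinuousAt (fun x : ℂ => (x, y₀)) c := by fun_prop
    exact hcont.eventually hW
  have hK : ∀ᶠ x in nhdsWithin c {c}ᶜ,
      (x - c) * (-(a - b) * c' * F x * G x) +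
      ((x - c) * ((x - c) * Fy x) * G x - F x * ((x - c) * ((x - c) * Gy x))) +
      E * (x - c) ^ 2 * F x * G x -
      ((a * (a - 1) * F x + 2 * a * (x - c) * deriv F x + (x - c) ^ 2 * deriv (deriv F) x) * G x
        - 2 * (a * F x + (x - c) * deriv F x) * (b * G x + (x - c) * deriv G x)
        + F x * (b * (b - 1) * G x + 2 * b * (x - c) * deriv G x +
          (x - c) ^ 2 * deriv (deriv G) x)) -
      2 * p * (x - c) * ((a * F x + (x - c) * deriv F x) * G x -
        F x * (b * G x + (x - c) * deriv G x)) -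
      p ^ 2 * (x - c) ^ 2 * F x * G x = 0 := by
    filter_upwards [eventually_deriv_sub_pow_mul a hF, eventually_deriv_sub_pow_mul b hG,
      hCF.filter_mono nhdsWithin_le_nhds, hCG.filter_mono nhdsWithin_le_nhds,
      hWx.filter_mono nhdsWithin_le_nhds, self_mem_nhdsWithin]
      with x hFx hGx hFyx hGyx hxW hx
    have hne : x - c ≠ 0 := sub_ne_zero.2 hx
    have hFy' := deriv_pow_mul_of_ne_zero (u := fun y => x - x₀ y) a
      (hx₀d.const_sub x) hFyx.1 hne
    have hGy' := deriv_pow_mul_of_ne_zero (u := fun y => x - x₀ y) b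
      (hx₀d.const_sub x) hGyx.1 hne
    rw [deriv_const_sub] at hFy' hGy'
    have hxy := heq (x, y₀) hxW
    change (deriv (fun y => (x - x₀ y) ^ a * φA (x, y)) y₀ * ((x - c) ^ b * G x) -
      (x - c) ^ a * F x * deriv (fun y => (x - x₀ y) ^ b * φ (x, y)) y₀) +
      E * ((x - c) ^ a * F x) * ((x - c) ^ b * G x) -
      (deriv (deriv fun z => (z - c) ^ a * F z) x * ((x - c) ^ b * G x) -
        2 * deriv (fun z => (z - c) ^ a * F z) x * deriv (fun z => (z - c) ^ b * G z) x +
        (x - c) ^ a * F x * deriv (deriv fun z => (z - c) ^ b * G z) x) -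
      2 * p * (deriv (fun z => (z - c) ^ a * F z) x * ((x - c) ^ b * G x) -
        (x - c) ^ a * F x * deriv (fun z => (z - c) ^ b * G z) x) -
      p ^ 2 * ((x - c) ^ a * F x) * ((x - c) ^ b * G x) = 0 at hxy
    rw [hFy', hGy', hFx.1, hFx.2, hGx.1, hGx.2] at hxy
    have hpow : (x - c) ^ a * (x - c) ^ b ≠ 0 := mul_ne_zero (pow_ne_zero _ hne) (pow_ne_zero _ hne)
    refine (mul_eq_zero.1 (?_ : (x - c) ^ a * (x - c) ^ b * _ = 0)).resolve_left hpow
    rw [← mul_zero ((x - c) ^ 2), ← hxy]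
    simp only [hFdef, hGdef, hFy, hGy, hc', hc] at hne ⊢
    field_simp
    ring
  have hs : Filter.Tendsto (fun x => x - c) (nhdsWithin c {c}ᶜ) (nhds 0) := by
    have : Filter.Tendsto (fun x => x - c) (nhds c) (nhds (c - c)) :=
      (continuous_id.sub continuous_const).tendsto c
    rw [sub_self] at this
    exact this.mono_left nhdsWithin_le_nhds
  have hbdd : ∀ {h : ℂ → ℂ} {C : ℝ}, (∀ᶠ x in nhds c, ‖h x‖ ≤ C) →
      Filter.Tendsto (fun x => (x - c) * h x) (nhdsWithin c {c}ᶜ) (nhds 0) := fun hh =>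
    hs.zero_mul_isBoundedUnder_le
      (Filter.isBoundedUnder_of_eventually_le (hh.filter_mono nhdsWithin_le_nhds))
  have hFy0 := hbdd (hCF.mono fun _ h => h.2)
  have hGy0 := hbdd (hCG.mono fun _ h => h.2)
  have lim : ∀ {h : ℂ → ℂ}, AnalyticAt ℂ h c →
      Filter.Tendsto h (nhdsWithin c {c}ᶜ) (nhds (h c)) := fun hh =>
    hh.continuousAt.tendsto.mono_left nhdsWithin_le_nhds
  have tF := lim hF
  have tG := lim hG
  have tF1 := lim hF.deriv
  have tG1 := lim hG.deriv
  have tF2 := lim hF.deriv.deriv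
  have tG2 := lim hG.deriv.deriv
  have k : ∀ z : ℂ, Filter.Tendsto (fun _ : ℂ => z) (nhdsWithin c {c}ᶜ) (nhds z) :=
    fun z => tendsto_const_nhds
  have hlim := ((((((hs.mul (((k (-(a - b) * c')).mul tF).mul tG)).add
      (((hs.mul hFy0).mul tG).sub (tF.mul (hs.mul hGy0)))).add
      ((((k E).mul (hs.pow 2)).mul tF).mul tG)).sub
      (((((((k (a * (a - 1))).mul tF).add (((k (2 * a)).mul hs).mul tF1)).add
          ((hs.pow 2).mul tF2)).mul tG).sub
        (((k 2).mul (((k a).mul tF).add (hs.mul tF1))).mul (((k b).mul tG).add (hs.mul tG1)))).add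
        (tF.mul ((((k (b * (b - 1))).mul tG).add (((k (2 * b)).mul hs).mul tG1)).add
          ((hs.pow 2).mul tG2))))).sub
      (((k (2 * p)).mul hs).mul (((((k a).mul tF).add (hs.mul tF1)).mul tG).sub
        (tF.mul (((k b).mul tG).add (hs.mul tG1)))))).sub
      ((((k (p ^ 2)).mul (hs.pow 2)).mul tF).mul tG))
  have hzero := tendsto_nhds_unique (hlim.congr' hK) tendsto_const_nhds
  have hprod : (((a : ℂ) - b) ^ 2 - (a + b)) * (F c * G c) = 0 := by
    linear_combination -hzero
  have hcast : ((a : ℂ) - b) ^ 2 = a + b :=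
    sub_eq_zero.1 ((mul_eq_zero.1 hprod).resolve_right (mul_ne_zero hφA0 hφ0))
  have hint : ((a : ℤ) - (b : ℤ)) ^ 2 = (a : ℤ) + (b : ℤ) := by exact_mod_cast hcast
  exact ⟨hint, by linarith, by linarith⟩
end

section
/- Let f : ℂ² → ℂ be an entire function satisfying the heat equation ∂_y f = ∂_x² f. Let ν ∈ ℤ, set a := ν(ν+1)/2 and b := ν(ν−1)/2 (which are nonnegative integers), and let p, E ∈ ℂ. Define τ(x,y) := f(x, νy)^b and τ_A(x,y) := e^{−px−Ey} f(x, νy)^a. Then the Hirota bilinear equation ((D_y+E)−(D_x+p)²)τ_A·τ = 0 holds identically on ℂ². -/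
section Slices

variable {f : ℂ × ℂ → ℂ}

lemma hasDerivAt_pdx (hf : Differentiable ℂ f) (x y : ℂ) :
    HasDerivAt (fun t => f (t, y)) (pdx f (x, y)) x := by
  have h : Differentiable ℂ (fun t => f (t, y)) := by fun_prop
  exact (h x).hasDerivAt

lemma hasDerivAt_pdy (hf : Differentiable ℂ f) (x y : ℂ) :
    HasDerivAt (fun t => f (x, t)) (pdy f (x, y)) y := by
  have h : Differentiable ℂ (fun t => f (x, t)) := by fun_prop
  exact (h y).hasDerivAt

lemma hasDerivAt_pdx_pdx (hf : Differentiable ℂ f) (x y : ℂ) :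
    HasDerivAt (fun t => pdx f (t, y)) (pdx (pdx f) (x, y)) x := by
  have h : Differentiable ℂ (fun t => f (t, y)) := by fun_prop
  have h' : Differentiable ℂ (deriv fun t => f (t, y)) := h.deriv
  exact (h' x).hasDerivAt

lemma hasDerivAt_pdy_scaled (hf : Differentiable ℂ f) (c x y : ℂ) :
    HasDerivAt (fun t => f (x, c * t)) (pdy f (x, c * y) * c) y :=
  (hasDerivAt_pdy hf x (c * y)).comp y (by simpa using (hasDerivAt_id y).const_mul c)

end Slices

lemma hasDerivAt_exp_linear_fst (p E x y : ℂ) :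
    HasDerivAt (fun t => Complex.exp (-(p * t) - E * y))
      (Complex.exp (-(p * x) - E * y) * -p) x := by
  have h : HasDerivAt (fun t => -(p * t) - E * y) (-p) x := by
    simpa using (((hasDerivAt_id x).const_mul p).neg.sub_const (E * y))
  exact h.cexp

lemma hasDerivAt_exp_linear_snd (p E x y : ℂ) :
    HasDerivAt (fun t => Complex.exp (-(p * x) - E * t))
      (Complex.exp (-(p * x) - E * y) * -E) y := by
  have h : HasDerivAt (fun t => -(p * x) - E * t) (-E) y := by
    simpa using (((hasDerivAt_id y).const_mul E).const_sub (-(p * x)))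
  exact h.cexp

section ExpMulPow

variable {f : ℂ × ℂ → ℂ}

lemma pdx_exp_mul_pow (hf : Differentiable ℂ f) (c p E : ℂ) (n : ℕ) :
    pdx (fun r => Complex.exp (-(p * r.1) - E * r.2) * f (r.1, c * r.2) ^ n) = fun r =>
      Complex.exp (-(p * r.1) - E * r.2) *
        (n * f (r.1, c * r.2) ^ (n - 1) * pdx f (r.1, c * r.2) - p * f (r.1, c * r.2) ^ n) := by
  funext ⟨x, y⟩
  refine ((hasDerivAt_exp_linear_fst p E x y).mul
    ((hasDerivAt_pdx hf x (c * y)).pow n)).deriv.trans ?_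
  simp only [Pi.pow_apply]
  ring

lemma pdx_pdx_exp_mul_pow (hf : Differentiable ℂ f) (c p E : ℂ) (n : ℕ) :
    pdx (pdx fun r => Complex.exp (-(p * r.1) - E * r.2) * f (r.1, c * r.2) ^ n) = fun r =>
      Complex.exp (-(p * r.1) - E * r.2) *
        (n * (n - 1 : ℕ) * f (r.1, c * r.2) ^ (n - 2) * pdx f (r.1, c * r.2) ^ 2
          + n * f (r.1, c * r.2) ^ (n - 1) * pdx (pdx f) (r.1, c * r.2)
          - 2 * p * (n * f (r.1, c * r.2) ^ (n - 1) * pdx f (r.1, c * r.2))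
          + p ^ 2 * f (r.1, c * r.2) ^ n) := by
  rw [pdx_exp_mul_pow hf]
  funext ⟨x, y⟩
  have hx := hasDerivAt_pdx hf x (c * y)
  refine ((hasDerivAt_exp_linear_fst p E x y).mul
    ((((hx.pow (n - 1)).const_mul (n : ℂ)).mul (hasDerivAt_pdx_pdx hf x (c * y))).sub
      ((hx.pow n).const_mul p))).deriv.trans ?_
  simp only [Pi.pow_apply, Pi.mul_apply, Pi.sub_apply, Nat.sub_sub]
  ring

lemma pdy_exp_mul_pow (hf : Differentiable ℂ f) (c p E : ℂ) (n : ℕ) :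
    pdy (fun r => Complex.exp (-(p * r.1) - E * r.2) * f (r.1, c * r.2) ^ n) = fun r =>
      Complex.exp (-(p * r.1) - E * r.2) *
        (c * (n * f (r.1, c * r.2) ^ (n - 1) * pdy f (r.1, c * r.2))
          - E * f (r.1, c * r.2) ^ n) := by
  funext ⟨x, y⟩
  refine ((hasDerivAt_exp_linear_snd p E x y).mul
    ((hasDerivAt_pdy_scaled hf c x y).pow n)).deriv.trans ?_
  simp only [Pi.pow_apply]
  ring

end ExpMulPow

section PowerIdentities

variable {R : Type*} [CommRing R]

lemma natCast_mul_pow_pred_mul_pow (z : R) (a b : ℕ) :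
    (a : R) * z ^ (a - 1) * z ^ b = a * z ^ (a + b - 1) := by
  rcases a with _ | a
  · simp
  · rw [mul_assoc, ← pow_add]
    congr 2
    omega

lemma natCast_mul_pred_mul_pow_mul_pow (z : R) (a b : ℕ) :
    (a : R) * (a - 1 : ℕ) * z ^ (a - 2) * z ^ b = a * (a - 1) * z ^ (a + b - 2) := by
  rcases a with _ | _ | a
  · simp
  · simp
  · rw [mul_assoc, ← pow_add, show a + 1 + 1 - 2 + b = a + 1 + 1 + b - 2 by omega]
    simp

lemma natCast_mul_pow_pred_mul_natCast_mul_pow_pred (z : R) (a b : ℕ) :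
    ((a : R) * z ^ (a - 1)) * (b * z ^ (b - 1)) = a * b * z ^ (a + b - 2) := by
  rcases a with _ | a
  · simp
  rcases b with _ | b
  · simp
  rw [mul_mul_mul_comm, ← pow_add]
  congr 2
  omega

end PowerIdentities

/-- converse direction of Lemma 2.1: for an entire solution f of the
heat equation ∂_y f = ∂_x² f, ν ∈ ℤ, a = ν(ν+1)/2, b = ν(ν−1)/2, p, E ∈ ℂ, the pair
`τ = f(x, νy)^b`, `τ_A = e^{−px−Ey} f(x, νy)^a` satisfies the Hirota bilinear
equation `((D_y+E)−(D_x+p)²)τ_A·τ = 0` identically. -/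
theorem stmt_5 (f : ℂ × ℂ → ℂ) (hf : Differentiable ℂ f)
    (hheat : ∀ q : ℂ × ℂ, pdy f q = pdx (pdx f) q)
    (ν : ℤ) (a b : ℕ)
    (ha : 2 * (a : ℤ) = ν * (ν + 1)) (hb : 2 * (b : ℤ) = ν * (ν - 1))
    (p E : ℂ) :
    ∀ q : ℂ × ℂ,
      HirotaL p E
        (fun r => Complex.exp (-(p * r.1) - E * r.2) * f (r.1, (ν : ℂ) * r.2) ^ a)
        (fun r => f (r.1, (ν : ℂ) * r.2) ^ b) q = 0 := by
  rintro ⟨x, y⟩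
  have hsub : (a : ℂ) - b = ν := by
    have : (a : ℤ) - b = ν := by linarith
    exact_mod_cast this
  have hadd : (a : ℂ) + b = ν ^ 2 := by
    have : (a : ℤ) + b = ν ^ 2 := by linarith
    exact_mod_cast this
  have hτ : (fun r : ℂ × ℂ => f (r.1, (ν : ℂ) * r.2) ^ b) = fun r =>
      Complex.exp (-(0 * r.1) - 0 * r.2) * f (r.1, (ν : ℂ) * r.2) ^ b := by
    simp
  rw [hτ]
  simp only [HirotaL, Dy, Dx, Dx2]
  rw [pdx_pdx_exp_mul_pow hf, pdx_pdx_exp_mul_pow hf]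
  simp only [pdx_exp_mul_pow hf, pdy_exp_mul_pow hf, hheat]
  simp only [zero_mul, neg_zero, sub_zero, Complex.exp_zero, one_mul]
  set z := f (x, ν * y)
  set u := pdx f (x, ν * y)
  set v := pdx (pdx f) (x, ν * y)
  set e := Complex.exp (-(p * x) - E * y)
  have hab := natCast_mul_pow_pred_mul_pow z a b
  have hba := natCast_mul_pow_pred_mul_pow z b a
  have haa := natCast_mul_pred_mul_pow_mul_pow z a b
  have hbb := natCast_mul_pred_mul_pow_mul_pow z b a
  have hmix := natCast_mul_pow_pred_mul_natCast_mul_pow_pred z a b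
  rw [add_comm b a] at hba hbb
  linear_combination e * v * (ν - 1) * hab - e * v * (ν + 1) * hba - e * u ^ 2 * haa
    - e * u ^ 2 * hbb + 2 * e * u ^ 2 * hmix
    + e * v * z ^ (a + b - 1) * (ν * hsub - hadd)
    - e * u ^ 2 * z ^ (a + b - 2) * ((a - b + ν) * hsub - hadd)
end

section
/- Let D ⊆ ℂ be open, let x₀, α : D → ℂ be holomorphic, let Ω ⊆ ℂ² be an open set containing the graph {(x₀(y), y) : y ∈ D}, and let ũ, ψ̃ : Ω → ℂ be holomorphic. For (x,y) ∈ Ω with x ≠ x₀(y), define u(x,y) := 2/(x − x₀(y))² + ũ(x,y) and ψ(x,y) := α(y)/(x − x₀(y)) + ψ̃(x,y), and assume ∂_yψ − ∂_x²ψ + uψ = 0 holds at all such points. Set v(y) := ũ(x₀(y), y), w(y) := ∂_xũ(x₀(y), y), β(y) := ψ̃(x₀(y), y), γ(y) := ∂_xψ̃(x₀(y), y). Then for every y ∈ D the following three equations hold: α(y)·x₀'(y) + 2β(y) = 0; α'(y) + α(y)v(y) + 2γ(y) = 0; β'(y) + v(y)β(y) − γ(y)x₀'(y) + α(y)w(y)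 = 0. -/
/-- The meromorphic solution `ψ = α(y)/(x − x₀(y)) + ψ̃(x,y)`. -/
noncomputable def psiPole (x₀ α : ℂ → ℂ) (ψt : ℂ × ℂ → ℂ) : ℂ × ℂ → ℂ :=
  fun q => α q.2 / (q.1 - x₀ q.2) + ψt q

/-- The potential `u = 2/(x − x₀(y))² + ũ(x,y)`. -/
noncomputable def uPole (x₀ : ℂ → ℂ) (ut : ℂ × ℂ → ℂ) : ℂ × ℂ → ℂ :=
  fun q => 2 / (q.1 - x₀ q.2) ^ 2 + ut q

open Filter Topology

/-- A function continuous at `a` that vanishes on a punctured neighbourhood of `a` vanishes at `a`. -/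
lemma ContinuousAt.eq_zero_of_eventually_nhdsNE {P : ℂ → ℂ} {a : ℂ} (hP : ContinuousAt P a)
    (h : ∀ᶠ x in 𝓝[≠] a, P x = 0) : P a = 0 :=
  tendsto_nhds_unique (hP.tendsto.mono_left nhdsWithin_le_nhds)
    (tendsto_const_nhds.congr' (h.mono fun _ hx => hx.symm))

/-- The derivative of the first divided difference of an analytic function at its base point
is half the second derivative. -/
lemma two_mul_deriv_dslope_same {f : ℂ → ℂ} {a : ℂ}
    (hs : AnalyticAt ℂ (dslope f a) a) :
    2 * deriv (dslope f a) a = deriv (deriv f) a := by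
  have hfs : ∀ x, f x = f a + (x - a) * dslope f a x := fun x => by
    have := sub_smul_dslope f a x
    rw [smul_eq_mul] at this
    rw [this]; ring
  have h1 : deriv f =ᶠ[nhds a] fun x => dslope f a x + (x - a) * deriv (dslope f a) x := by
    filter_upwards [hs.eventually_analyticAt] with x hx
    have h2 : HasDerivAt f (1 * dslope f a x + (x - a) * deriv (dslope f a) x) x :=
      ((((hasDerivAt_id x).sub_const a).mul hx.differentiableAt.hasDerivAt).const_add
        (f a)).congr_of_eventuallyEq (Filter.Eventually.of_forall hfs)
    rw [h2.deriv, one_mul]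
  rw [h1.deriv_eq]
  have h3 := hs.differentiableAt.hasDerivAt.add
    (((hasDerivAt_id a).sub_const a).mul hs.deriv.differentiableAt.hasDerivAt)
  have h4 := h3.deriv
  simp only [id, sub_self, zero_mul, add_zero, one_mul] at h4
  rw [two_mul, ← h4]
  rfl

/-- Vanishing of the first three Taylor coefficients at `a` in the identity obtained from the
auxiliary linear equation by clearing the pole. -/
lemma taylor_coefficients_of_pole_equation {f g h : ℂ → ℂ} {a c A B : ℂ}
    (hf : AnalyticAt ℂ f a) (hg : DifferentiableAt ℂ g a) (hh : ContinuousAt h a)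
    (heq : ∀ᶠ x in 𝓝[≠] a, c + 2 * f x + (x - a) * (A + B * g x)
      + (x - a) ^ 2 * (h x - deriv (deriv f) x + g x * f x) = 0) :
    c + 2 * f a = 0 ∧ A + B * g a + 2 * deriv f a = 0 ∧
      h a + g a * f a + B * deriv g a = 0 := by
  have hs : AnalyticAt ℂ (dslope f a) a := by
    obtain ⟨U, hU, hfU⟩ := (Complex.analyticAt_iff_eventually_differentiableAt.1 hf).exists_mem
    rw [Complex.analyticAt_iff_eventually_differentiableAt]
    have hd : DifferentiableOn ℂ (dslope f a) U :=
      (Complex.differentiableOn_dslope hU).2 fun x hx => (hfU x hx).differentiableWithinAt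
    filter_upwards [eventually_mem_nhds_iff.2 hU] with x hx using hd.differentiableAt hx
  have hfs : ∀ x, f x = f a + (x - a) * dslope f a x := fun x => by
    have := sub_smul_dslope f a x
    rw [smul_eq_mul] at this
    rw [this]; ring
  have hgs : ∀ x, g x = g a + (x - a) * dslope g a x := fun x => by
    have := sub_smul_dslope g a x
    rw [smul_eq_mul] at this
    rw [this]; ring
  have hss : ∀ x, dslope f a x = deriv f a + (x - a) * dslope (dslope f a) a x := fun x => by
    have := sub_smul_dslope (dslope f a) a x
    rw [smul_eq_mul, dslope_same] at this
    rw [this]; ring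
  have hfc := hf.continuousAt
  have hgc := hg.continuousAt
  have hsc := hs.continuousAt
  have hrc : ContinuousAt (dslope (dslope f a) a) a :=
    continuousAt_dslope_same.2 hs.differentiableAt
  have hgsc : ContinuousAt (dslope g a) a := continuousAt_dslope_same.2 hg
  have hf2c : ContinuousAt (deriv (deriv f)) a := hf.deriv.deriv.continuousAt
  have hne : ∀ᶠ x in 𝓝[≠] a, x - a ≠ 0 :=
    eventually_mem_nhdsWithin.mono fun x hx => sub_ne_zero.2 hx
  have e0 : c + 2 * f a = 0 := by
    have := ContinuousAt.eq_zero_of_eventually_nhdsNE (by fun_prop) heq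
    simpa using this
  have heq1 : ∀ᶠ x in 𝓝[≠] a, 2 * dslope f a x + (A + B * g x)
      + (x - a) * (h x - deriv (deriv f) x + g x * f x) = 0 := by
    filter_upwards [heq, hne] with x hx hxa
    refine (mul_eq_zero.1 ?_).resolve_left hxa
    linear_combination hx - e0 - 2 * hfs x
  have e1 : A + B * g a + 2 * deriv f a = 0 := by
    have := ContinuousAt.eq_zero_of_eventually_nhdsNE (by fun_prop) heq1
    simp only [dslope_same, sub_self, zero_mul, add_zero] at this
    linear_combination this
  have heq2 : ∀ᶠ x in 𝓝[≠] a, 2 * dslope (dslope f a) a x + B * dslope g a x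
      + (h x - deriv (deriv f) x + g x * f x) = 0 := by
    filter_upwards [heq1, hne] with x hx hxa
    refine (mul_eq_zero.1 ?_).resolve_left hxa
    linear_combination hx - e1 - 2 * hss x - B * hgs x
  refine ⟨e0, e1, ?_⟩
  have := ContinuousAt.eq_zero_of_eventually_nhdsNE (by fun_prop) heq2
  simp only [dslope_same] at this
  linear_combination this - two_mul_deriv_dslope_same hs

/-- The partial derivative `∂_y f` of a holomorphic function is continuous in `x`. -/
lemma continuousAt_pdy_left {Ω : Set (ℂ × ℂ)} (hΩ : IsOpen Ω) {f : ℂ × ℂ → ℂ}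
    (hf : DifferentiableOn ℂ f Ω) {a y : ℂ} (ha : (a, y) ∈ Ω) :
    ContinuousAt (fun x => pdy f (x, y)) a := by
  obtain ⟨U, V, hU, hV, haU, hyV, hUV⟩ := isOpen_prod_iff.1 hΩ a y ha
  have hlim : TendstoLocallyUniformlyOn (fun x z => f (x, z)) (fun z => f (a, z)) (𝓝 a) V := by
    rw [tendstoLocallyUniformlyOn_iff_forall_tendsto]
    intro z hz
    have hc : ContinuousAt f (a, z) :=
      (hf.differentiableAt (hΩ.mem_nhds (hUV ⟨haU, hz⟩))).continuousAt
    have t1 : Tendsto (fun p : ℂ × ℂ => f p) (𝓝 a ×ˢ 𝓝[V] z) (𝓝 (f (a, z))) := by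
      refine hc.tendsto.mono_left ?_
      rw [nhds_prod_eq]
      exact Filter.prod_mono le_rfl nhdsWithin_le_nhds
    have t2 : Tendsto (fun p : ℂ × ℂ => f (a, p.2)) (𝓝 a ×ˢ 𝓝[V] z) (𝓝 (f (a, z))) := by
      have h2 : Tendsto (fun p : ℂ × ℂ => (a, p.2)) (𝓝 a ×ˢ 𝓝[V] z) (𝓝 (a, z)) := by
        rw [nhds_prod_eq]
        exact tendsto_const_nhds.prodMk (tendsto_snd.mono_right nhdsWithin_le_nhds)
      exact hc.tendsto.comp h2
    have := t2.prodMk_nhds t1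
    exact this.mono_right (nhds_le_uniformity _)
  have hdiff : ∀ᶠ x in 𝓝 a, DifferentiableOn ℂ (fun z => f (x, z)) V := by
    filter_upwards [hU.mem_nhds haU] with x hx z hz
    have hxz : (x, z) ∈ Ω := hUV ⟨hx, hz⟩
    have := hf.differentiableAt (hΩ.mem_nhds hxz)
    exact (this.comp z
      (by fun_prop : DifferentiableAt ℂ (fun z => (x, z)) z)).differentiableWithinAt
  exact (hlim.deriv hdiff hV).tendsto_at hyV

/-- Chain rule along the graph of `x₀`. -/
lemma deriv_along_graph {x₀ : ℂ → ℂ} {f : ℂ × ℂ → ℂ} {y dx₀ : ℂ}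
    (hx₀ : HasDerivAt x₀ dx₀ y) (hf : DifferentiableAt ℂ f (x₀ y, y)) :
    deriv (fun z => f (x₀ z, z)) y = pdx f (x₀ y, y) * dx₀ + pdy f (x₀ y, y) := by
  have h1 : pdx f (x₀ y, y) = fderiv ℂ f (x₀ y, y) (1, 0) :=
    (hf.hasFDerivAt.comp_hasDerivAt (x₀ y)
      ((hasDerivAt_id (x₀ y)).prodMk (hasDerivAt_const (x₀ y) y))).deriv
  have h2 : pdy f (x₀ y, y) = fderiv ℂ f (x₀ y, y) (0, 1) :=
    (hf.hasFDerivAt.comp_hasDerivAt y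
      ((hasDerivAt_const y (x₀ y)).prodMk (hasDerivAt_id y))).deriv
  have h3 : deriv (fun z => f (x₀ z, z)) y = fderiv ℂ f (x₀ y, y) (dx₀, 1) :=
    (HasFDerivAt.comp_hasDerivAt (f := fun z => (x₀ z, z)) y hf.hasFDerivAt
      (hx₀.prodMk (hasDerivAt_id y))).deriv
  have h4 : ((dx₀, 1) : ℂ × ℂ) = dx₀ • (1, 0) + (0, 1) := by simp
  rw [h3, h4, map_add, map_smul, ← h1, ← h2, smul_eq_mul, mul_comm]

/-- The `y`-derivative of a function with a simple pole along the graph of `x₀`. -/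
lemma pdy_psiPole {x₀ α : ℂ → ℂ} {ψt : ℂ × ℂ → ℂ} {x y dx₀ dα : ℂ}
    (hx₀ : HasDerivAt x₀ dx₀ y) (hα : HasDerivAt α dα y)
    (hψ : DifferentiableAt ℂ ψt (x, y)) (hx : x ≠ x₀ y) :
    pdy (psiPole x₀ α ψt) (x, y) =
      dα / (x - x₀ y) + α y * dx₀ / (x - x₀ y) ^ 2 + pdy ψt (x, y) := by
  have hne : x - x₀ y ≠ 0 := sub_ne_zero.2 hx
  have hline : DifferentiableAt ℂ (fun z : ℂ => (x, z)) y := by fun_prop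
  have h1 : HasDerivAt (fun z => ψt (x, z)) (pdy ψt (x, y)) y :=
    (hψ.comp y hline).hasDerivAt
  have h2 := ((hα.div (hx₀.const_sub x) hne).add h1).deriv
  refine h2.trans ?_
  field_simp
  ring

/-- The second `x`-derivative of a function with a simple pole along the graph of `x₀`. -/
lemma pdx_pdx_psiPole {x₀ α : ℂ → ℂ} {ψt : ℂ × ℂ → ℂ} {x y : ℂ}
    (hψ : AnalyticAt ℂ (fun z => ψt (z, y)) x) (hx : x ≠ x₀ y) :
    pdx (pdx (psiPole x₀ α ψt)) (x, y) =
      2 * α y / (x - x₀ y) ^ 3 + deriv (deriv fun z => ψt (z, y)) x := by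
  have h1 : (fun z => pdx (psiPole x₀ α ψt) (z, y)) =ᶠ[𝓝 x]
      fun z => -α y / (z - x₀ y) ^ 2 + deriv (fun z => ψt (z, y)) z := by
    filter_upwards [hψ.eventually_analyticAt, eventually_ne_nhds hx] with z hz hzx
    have hne : z - x₀ y ≠ 0 := sub_ne_zero.2 hzx
    refine ((((hasDerivAt_const z (α y)).div ((hasDerivAt_id z).sub_const (x₀ y)) hne).add
      hz.differentiableAt.hasDerivAt).deriv).trans ?_
    simp
  have hne : x - x₀ y ≠ 0 := sub_ne_zero.2 hx
  refine h1.deriv_eq.trans ?_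
  refine ((((hasDerivAt_const x (-α y)).div (((hasDerivAt_id x).sub_const (x₀ y)).pow 2)
    (pow_ne_zero 2 hne)).add hψ.deriv.differentiableAt.hasDerivAt).deriv).trans ?_
  simp only [id]
  field_simp
  simp
  ring

/-- equations (3.6)–(3.8) of the paper: if
`ψ = α(y)/(x−x₀(y)) + ψ̃` with `u = 2/(x−x₀(y))² + ũ` solves
`∂_yψ − ∂_x²ψ + uψ = 0` away from the pole, then with
`v = ũ(x₀(y),y)`, `w = ∂_xũ(x₀(y),y)`, `β = ψ̃(x₀(y),y)`, `γ = ∂_xψ̃(x₀(y),y)`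
one has `α ẋ₀ + 2β = 0`, `α̇ + αv + 2γ = 0`, `β̇ + vβ − γẋ₀ + αw = 0`. -/
theorem stmt_6 (D : Set ℂ) (hD : IsOpen D)
    (x₀ α : ℂ → ℂ) (hx₀ : DifferentiableOn ℂ x₀ D) (hα : DifferentiableOn ℂ α D)
    (Ω : Set (ℂ × ℂ)) (hΩ : IsOpen Ω)
    (hgraph : ∀ y ∈ D, ((x₀ y, y) : ℂ × ℂ) ∈ Ω)
    (ut ψt : ℂ × ℂ → ℂ)
    (hut : DifferentiableOn ℂ ut Ω) (hψt : DifferentiableOn ℂ ψt Ω)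
    (heq : ∀ q ∈ Ω, q.2 ∈ D → q.1 ≠ x₀ q.2 →
      pdy (psiPole x₀ α ψt) q - pdx (pdx (psiPole x₀ α ψt)) q
        + uPole x₀ ut q * psiPole x₀ α ψt q = 0) :
    ∀ y ∈ D,
      α y * deriv x₀ y + 2 * ψt (x₀ y, y) = 0 ∧
      deriv α y + α y * ut (x₀ y, y) + 2 * pdx ψt (x₀ y, y) = 0 ∧
      deriv (fun y' => ψt (x₀ y', y')) y + ut (x₀ y, y) * ψt (x₀ y, y)
        - pdx ψt (x₀ y, y) * deriv x₀ y + α y * pdx ut (x₀ y, y) = 0 := by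
  intro y hy
  set a := x₀ y with ha
  have hx₀y := (hx₀.differentiableAt (hD.mem_nhds hy)).hasDerivAt
  have hαy := (hα.differentiableAt (hD.mem_nhds hy)).hasDerivAt
  have hψa := hψt.differentiableAt (hΩ.mem_nhds (hgraph y hy))
  have hua := hut.differentiableAt (hΩ.mem_nhds (hgraph y hy))
  have hline : ∀ x : ℂ, DifferentiableAt ℂ (fun x : ℂ => (x, y)) x := fun x => by fun_prop
  have hmem : ∀ᶠ x in 𝓝 a, (x, y) ∈ Ω :=
    (hline a).continuousAt.eventually_mem (hΩ.mem_nhds (hgraph y hy))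
  have hf : AnalyticAt ℂ (fun x => ψt (x, y)) a := by
    rw [Complex.analyticAt_iff_eventually_differentiableAt]
    filter_upwards [hmem] with x hx
    exact (hψt.differentiableAt (hΩ.mem_nhds hx)).comp x (hline x)
  have hg : DifferentiableAt ℂ (fun x => ut (x, y)) a := hua.comp a (hline a)
  have key : ∀ᶠ x in 𝓝[≠] a, α y * deriv x₀ y + 2 * ψt (x, y)
      + (x - a) * (deriv α y + α y * ut (x, y))
      + (x - a) ^ 2 * (pdy ψt (x, y) - deriv (deriv fun x => ψt (x, y)) x
        + ut (x, y) * ψt (x, y)) = 0 := by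
    filter_upwards [nhdsWithin_le_nhds hmem, nhdsWithin_le_nhds hf.eventually_analyticAt,
      self_mem_nhdsWithin] with x hx hfx hxa
    have hne : x - a ≠ 0 := sub_ne_zero.2 hxa
    have h := heq (x, y) hx hy hxa
    rw [pdy_psiPole hx₀y hαy (hψt.differentiableAt (hΩ.mem_nhds hx)) hxa,
      pdx_pdx_psiPole hfx hxa] at h
    simp only [uPole, psiPole, ← ha] at h
    field_simp at h
    refine (mul_eq_zero.1 (?_ : (x - a) * _ = 0)).resolve_left hne
    linear_combination h
  obtain ⟨e0, e1, e2⟩ := taylor_coefficients_of_pole_equation hf hg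
    (continuousAt_pdy_left hΩ hψt (hgraph y hy)) key
  refine ⟨e0, e1, ?_⟩
  rw [deriv_along_graph hx₀y hψa]
  simp only [pdx, pdy] at e2 ⊢
  linear_combination e2
end

section
/- Let D ⊆ ℂ be open, let x₀, r : D → ℂ be holomorphic, let Ω ⊆ ℂ² be an open set containing the graph {(x₀(y), y) : y ∈ D}, let η, ũ : Ω → ℂ be holomorphic, and let b ∈ ℂ. For (x,y) ∈ Ω with x ≠ x₀(y), define ξ(x,y) := r(y)/(x − x₀(y)) + η(x,y), u(x,y) := 2/(x − x₀(y))² + ũ(x,y), and F := ∂_yξ + (u+b)ξ − ∂_x²ξ. Then the function F(x,y) − (r(y)x₀'(y) + 2η(x₀(y),y))/(x − x₀(y))² − (r'(y) + (ũ(x₀(y),y)+b)r(y) + 2∂_xη(x₀(y),y))/(x − x₀(y)) extends holomorphically across x = x₀(y). In particular, F has at most a double pole at x = x₀(y) (the third-order pole cancels), and its residue there equals r'(y) + (ũ(x₀(y),y)+b)r(y) + 2∂_xη(x₀(y),y). -/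
/-- `ξ(x,y) = r(y)/(x − x₀(y)) + η(x,y)`. -/
noncomputable def xiPole (x₀ r : ℂ → ℂ) (η : ℂ × ℂ → ℂ) : ℂ × ℂ → ℂ :=
  fun q => r q.2 / (q.1 - x₀ q.2) + η q

/-- `F = ∂_yξ + (u+b)ξ − ∂_x²ξ`, the right-hand side of the recursion
`2∂_xξ_{s+1} = ∂_yξ_s + (u+b)ξ_s − ∂_x²ξ_s`. -/
noncomputable def Frec (x₀ r : ℂ → ℂ) (η ut : ℂ × ℂ → ℂ) (b : ℂ) : ℂ × ℂ → ℂ :=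
  fun q => pdy (xiPole x₀ r η) q + (uPole x₀ ut q + b) * xiPole x₀ r η q
    - pdx (pdx (xiPole x₀ r η)) q

open Metric Filter Topology MeasureTheory Set

/-- An integral of a uniformly bounded family of holomorphic functions that depends continuously
on the integration variable is holomorphic. -/
theorem differentiableOn_intervalIntegral_of_bounded {H : Type*} [NormedAddCommGroup H]
    [NormedSpace ℂ H] [FiniteDimensional ℂ H] {K : H → ℝ → ℂ} {U : Set H} (hU : IsOpen U)
    {M : ℝ} (hd : ∀ θ, DifferentiableOn ℂ (fun w => K w θ) U)
    (hM : ∀ w ∈ U, ∀ θ, ‖K w θ‖ ≤ M) (hc : ∀ w ∈ U, Continuous (K w)) (a b : ℝ) :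
    DifferentiableOn ℂ (fun w => ∫ θ in a..b, K w θ) U := by
  intro p hp
  obtain ⟨ρ, hρ, hball⟩ := Metric.isOpen_iff.1 hU p hp
  have hat : ∀ θ, ∀ w ∈ U, HasFDerivAt (fun w => K w θ) (fderiv ℂ (fun w => K w θ) w) w :=
    fun θ w hw => ((hd θ).differentiableAt (hU.mem_nhds hw)).hasFDerivAt
  have happly : ∀ v : H, StronglyMeasurable fun θ => fderiv ℂ (fun w => K w θ) p v := by
    intro v
    have htend : Tendsto (fun n : ℕ => p + ((n : ℂ))⁻¹ • v) atTop (𝓝 p) := by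
      have h := (tendsto_inv_atTop_nhds_zero_nat (𝕜 := ℂ)).smul_const v
      simpa using h.const_add p
    obtain ⟨N, hN⟩ := eventually_atTop.1 (htend.eventually (hU.mem_nhds hp))
    refine stronglyMeasurable_of_tendsto (u := (atTop : Filter ℕ))
      (f := fun n θ => ((n + N : ℕ) : ℂ) • (K (p + (((n + N : ℕ) : ℂ))⁻¹ • v) θ - K p θ))
      (fun n => ?_) (tendsto_pi_nhds.2 fun θ => ?_)
    · have hdiff := (hc _ (hN _ (Nat.le_add_left N n))).sub (hc p hp)
      exact (hdiff.const_smul ((n + N : ℕ) : ℂ)).stronglyMeasurable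
    · refine (hat θ p hp).lim v (c := fun n : ℕ => ((n + N : ℕ) : ℂ)) ?_
      simp only [Complex.norm_natCast]
      exact tendsto_natCast_atTop_atTop.comp (tendsto_add_atTop_nat N)
  have hmeas : StronglyMeasurable fun θ => fderiv ℂ (fun w => K w θ) p := by
    let B := Module.finBasis ℂ H
    have heq : (fun θ => fderiv ℂ (fun w => K w θ) p) = fun θ => ∑ i,
        (fderiv ℂ (fun w => K w θ) p (B i)) • (LinearMap.toContinuousLinearMap (B.coord i)) := by
      funext θ
      ext v
      conv_lhs => rw [← B.sum_repr v, map_sum]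
      simp [mul_comm]
    rw [heq]
    exact Finset.stronglyMeasurable_fun_sum _ fun i _ => (happly (B i)).smul_const _
  refine (intervalIntegral.hasFDerivAt_integral_of_dominated_of_fderiv_le
    (F' := fun w θ => fderiv ℂ (fun w => K w θ) w) (bound := fun _ => (2 * M) / (ρ / 2))
    (ball_mem_nhds p (half_pos hρ)) ?_ ((hc p hp).intervalIntegrable _ _)
    hmeas.aestronglyMeasurable (.of_forall fun θ _ w hw => ?_) intervalIntegrable_const
    (.of_forall fun θ _ w hw => hat θ w ?_)).differentiableAt.differentiableWithinAt
  · filter_upwards [hU.mem_nhds hp] with w hw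
    exact (hc w hw).aestronglyMeasurable
  · have hsub : ball w (ρ / 2) ⊆ U := by
      refine (ball_subset_ball' ?_).trans hball
      rw [mem_ball] at hw
      linarith
    refine Complex.norm_fderiv_le_div_of_mapsTo_ball ((hd θ).mono hsub) (fun z hz => ?_)
      (half_pos hρ)
    rw [mem_closedBall, dist_eq_norm]
    linarith [norm_sub_le (K z θ) (K w θ), hM z (hsub hz) θ,
      hM w (hsub (mem_ball_self (half_pos hρ))) θ]
  · exact hball (ball_subset_ball (by linarith) hw)

/-- The divided difference in the first variable of a holomorphic function of two variables is
jointly holomorphic, including on the diagonal. -/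
theorem exists_dividedDifference {Ω : Set (ℂ × ℂ)} (hΩ : IsOpen Ω) {f : ℂ × ℂ → ℂ}
    (hf : DifferentiableOn ℂ f Ω) {p : ℂ × ℂ} (hp : p ∈ Ω) :
    ∃ (V : Set (ℂ × ℂ × ℂ)) (S : ℂ × ℂ × ℂ → ℂ), V ∈ 𝓝 (p.1, p.1, p.2) ∧
      DifferentiableOn ℂ S V ∧
      ∀ q ∈ V, f (q.1, q.2.2) - f (q.2.1, q.2.2) = (q.1 - q.2.1) * S q := by
  obtain ⟨R, hR, hsub⟩ := nhds_basis_closedBall.mem_iff.1 (hΩ.mem_nhds hp)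
  obtain ⟨C, hC⟩ := (isCompact_closedBall p R).exists_bound_of_continuousOn
    (hf.continuousOn.mono hsub)
  have hC0 : 0 ≤ C := (norm_nonneg _).trans (hC p (mem_closedBall_self hR.le))
  have hmem : ∀ q ∈ ball (p.1, p.1, p.2) (R / 2),
      dist q.1 p.1 < R / 2 ∧ dist q.2.1 p.1 < R / 2 ∧ dist q.2.2 p.2 < R / 2 := by
    intro q hq
    simpa [Prod.dist_eq] using hq
  have hclosed : ∀ q ∈ ball (p.1, p.1, p.2) (R / 2), ∀ z ∈ closedBall p.1 R,
      (z, q.2.2) ∈ closedBall p R := by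
    intro q hq z hz
    rw [mem_closedBall, Prod.dist_eq]
    exact max_le hz (by linarith [(hmem q hq).2.2])
  have hfar : ∀ z ∈ sphere p.1 R, ∀ w, dist w p.1 < R / 2 → R / 2 ≤ ‖z - w‖ := by
    intro z hz w hw
    rw [← dist_eq_norm]
    linarith [dist_triangle z w p.1, mem_sphere.1 hz]
  have hne : ∀ z ∈ sphere p.1 R, ∀ w, dist w p.1 < R / 2 → z - w ≠ 0 := fun z hz w hw =>
    norm_pos_iff.1 ((half_pos hR).trans_le (hfar z hz w hw))
  have hslice : ∀ q ∈ ball (p.1, p.1, p.2) (R / 2),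
      DifferentiableOn ℂ (fun z => f (z, q.2.2)) (closedBall p.1 R) := fun q hq =>
    hf.comp (by fun_prop) fun z hz => hsub (hclosed q hq z hz)
  have hcont : ∀ q ∈ ball (p.1, p.1, p.2) (R / 2), ContinuousOn
      (fun z => (z - q.1)⁻¹ * (z - q.2.1)⁻¹ * f (z, q.2.2)) (sphere p.1 R) := by
    intro q hq
    obtain ⟨h1, h2, -⟩ := hmem q hq
    exact ((ContinuousOn.inv₀ (by fun_prop) fun z hz => hne z hz _ h1).mul
      (ContinuousOn.inv₀ (by fun_prop) fun z hz => hne z hz _ h2)).mul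
      ((hslice q hq).continuousOn.mono sphere_subset_closedBall)
  refine ⟨ball (p.1, p.1, p.2) (R / 2), fun q => (2 * Real.pi * Complex.I : ℂ)⁻¹ *
    ∮ z in C(p.1, R), (z - q.1)⁻¹ * (z - q.2.1)⁻¹ * f (z, q.2.2),
    ball_mem_nhds _ (half_pos hR), ?_, fun q hq => ?_⟩
  · refine DifferentiableOn.const_mul (differentiableOn_intervalIntegral_of_bounded
      (U := ball (p.1, p.1, p.2) (R / 2)) isOpen_ball
      (M := R * ((R / 2)⁻¹ * (R / 2)⁻¹ * C)) (fun θ => ?_) (fun q hq θ => ?_) (fun q hq => ?_)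
      _ _) _
    · have hz := circleMap_mem_sphere p.1 hR.le θ
      refine DifferentiableOn.const_mul (DifferentiableOn.mul (DifferentiableOn.mul
        (DifferentiableOn.inv (by fun_prop) fun q hq => hne _ hz _ (hmem q hq).1)
        (DifferentiableOn.inv (by fun_prop) fun q hq => hne _ hz _ (hmem q hq).2.1)) ?_) _
      exact hf.comp (by fun_prop) fun q hq => hsub (hclosed q hq _ (sphere_subset_closedBall hz))
    · have hz := circleMap_mem_sphere p.1 hR.le θ
      obtain ⟨h1, h2, -⟩ := hmem q hq
      have i1 := inv_anti₀ (half_pos hR) (hfar _ hz _ h1)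
      have i2 := inv_anti₀ (half_pos hR) (hfar _ hz _ h2)
      have i3 := hC _ (hclosed q hq _ (sphere_subset_closedBall hz))
      rw [norm_smul, norm_mul, norm_mul, norm_inv, norm_inv]
      have hderiv : ‖deriv (circleMap p.1 R) θ‖ = R := by simp [abs_of_pos hR]
      rw [hderiv]
      gcongr
    · refine Continuous.mul ?_ ((hcont q hq).comp_continuous (continuous_circleMap _ _)
        (circleMap_mem_sphere _ hR.le))
      rw [funext (deriv_circleMap p.1 R)]
      fun_prop
  · obtain ⟨h1, h2, -⟩ := hmem q hq
    have hint : ∀ w, dist w p.1 < R / 2 →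
        CircleIntegrable (fun z => (z - w)⁻¹ • f (z, q.2.2)) p.1 R := fun w hw =>
      ContinuousOn.circleIntegrable hR.le <|
        (ContinuousOn.inv₀ (by fun_prop) fun z hz => hne z hz _ hw).smul
          ((hslice q hq).continuousOn.mono sphere_subset_closedBall)
    have hcauchy : ∀ w, dist w p.1 < R / 2 → f (w, q.2.2) = (2 * Real.pi * Complex.I : ℂ)⁻¹ *
        ∮ z in C(p.1, R), (z - w)⁻¹ • f (z, q.2.2) := by
      intro w hw
      rw [(hslice q hq).circleIntegral_sub_inv_smul (mem_ball.2 (by linarith)), smul_eq_mul,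
        inv_mul_cancel_left₀]
      simp [Real.pi_ne_zero, Complex.I_ne_zero]
    rw [hcauchy _ h1, hcauchy _ h2, ← mul_sub, ← circleIntegral.integral_sub (hint _ h1)
      (hint _ h2), mul_left_comm]
    congr 1
    rw [← circleIntegral.integral_const_mul]
    refine circleIntegral.integral_congr hR.le fun z hz => ?_
    have n1 := hne z hz _ h1
    have n2 := hne z hz _ h2
    simp only [smul_eq_mul]
    field_simp
    ring

theorem pdx_eq_of_sub_eq_mul {f S : ℂ × ℂ → ℂ} {a y : ℂ}
    (hS : DifferentiableAt ℂ S (a, y))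
    (h : ∀ᶠ x in 𝓝 a, f (x, y) - f (a, y) = (x - a) * S (x, y)) :
    pdx f (a, y) = S (a, y) := by
  have hslice : HasDerivAt (fun x => S (x, y)) (deriv (fun x => S (x, y)) a) a :=
    (DifferentiableAt.comp a hS
      (by fun_prop : DifferentiableAt ℂ (fun x : ℂ => (x, y)) a)).hasDerivAt
  have hmul := (((hasDerivAt_id a).sub_const a).mul hslice).const_add (f (a, y))
  have heq : (fun x => f (x, y)) =ᶠ[𝓝 a] fun x => f (a, y) + (x - a) * S (x, y) := by
    filter_upwards [h] with x hx
    rw [← hx]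
    ring
  simpa [pdx] using (hmul.congr_of_eventuallyEq heq).deriv

theorem differentiableOn_pdx {Ω : Set (ℂ × ℂ)} (hΩ : IsOpen Ω) {f : ℂ × ℂ → ℂ}
    (hf : DifferentiableOn ℂ f Ω) : DifferentiableOn ℂ (pdx f) Ω := by
  intro p hp
  obtain ⟨V, S, hV, hS, hfS⟩ := exists_dividedDifference hΩ hf hp
  obtain ⟨U, hUV, hU, hpU⟩ := _root_.mem_nhds_iff.1 hV
  have hdiag : DifferentiableAt ℂ (fun q : ℂ × ℂ => S (q.1, q.1, q.2)) p :=
    DifferentiableAt.comp p (f := fun q : ℂ × ℂ => (q.1, q.1, q.2))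
      ((hS.mono hUV).differentiableAt (hU.mem_nhds hpU)) (by fun_prop)
  refine (hdiag.congr_of_eventuallyEq ?_).differentiableWithinAt
  have hcont : Continuous fun q : ℂ × ℂ => (q.1, q.1, q.2) := by fun_prop
  filter_upwards [hcont.continuousAt.eventually (hU.mem_nhds hpU)] with q hq
  refine pdx_eq_of_sub_eq_mul (S := fun w => S (w.1, q.1, w.2)) (a := q.1) (y := q.2) ?_ ?_
  · exact DifferentiableAt.comp (q.1, q.2) (f := fun w : ℂ × ℂ => (w.1, q.1, w.2))
      ((hS.mono hUV).differentiableAt (hU.mem_nhds hq)) (by fun_prop)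
  · have hx : Continuous fun x : ℂ => (x, q.1, q.2) := by fun_prop
    filter_upwards [hx.continuousAt.eventually (hU.mem_nhds hq)] with x hxU
    exact hfS _ (hUV hxU)

theorem differentiableOn_pdy {Ω : Set (ℂ × ℂ)} (hΩ : IsOpen Ω) {f : ℂ × ℂ → ℂ}
    (hf : DifferentiableOn ℂ f Ω) : DifferentiableOn ℂ (pdy f) Ω := by
  have hswap : Differentiable ℂ fun q : ℂ × ℂ => (q.2, q.1) := by fun_prop
  have h := differentiableOn_pdx (hΩ.preimage hswap.continuous)
    (hf.comp hswap.differentiableOn fun q hq => hq)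
  exact h.comp hswap.differentiableOn fun q hq => hq

/-- The divided difference of a holomorphic function along a holomorphic graph `x = x₀ y`
extends holomorphically across the graph. -/
theorem exists_dividedDifference_graph {Ω : Set (ℂ × ℂ)} (hΩ : IsOpen Ω) {f : ℂ × ℂ → ℂ}
    (hf : DifferentiableOn ℂ f Ω) {D : Set ℂ} (hD : IsOpen D) {x₀ : ℂ → ℂ}
    (hx₀ : DifferentiableOn ℂ x₀ D) {y : ℂ} (hy : y ∈ D) (hyΩ : (x₀ y, y) ∈ Ω) :
    ∃ (V : Set (ℂ × ℂ)) (S : ℂ × ℂ → ℂ), IsOpen V ∧ (x₀ y, y) ∈ V ∧ DifferentiableOn ℂ S V ∧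
      ∀ q ∈ V, q ∈ Ω ∧ q.2 ∈ D ∧ (x₀ q.2, q.2) ∈ Ω ∧
        f q - f (x₀ q.2, q.2) = (q.1 - x₀ q.2) * S q := by
  obtain ⟨W, S, hW, hS, hfS⟩ := exists_dividedDifference hΩ hf hyΩ
  obtain ⟨U, hUW, hU, hyU⟩ := _root_.mem_nhds_iff.1 hW
  have hx : DifferentiableOn ℂ (fun q : ℂ × ℂ => x₀ q.2) (Prod.snd ⁻¹' D) :=
    hx₀.comp differentiableOn_snd fun q hq => hq
  have hD' : IsOpen (Prod.snd ⁻¹' D : Set (ℂ × ℂ)) := hD.preimage continuous_snd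
  have hlift : DifferentiableOn ℂ (fun q : ℂ × ℂ => (q.1, x₀ q.2, q.2)) (Prod.snd ⁻¹' D) :=
    differentiableOn_fst.prodMk (hx.prodMk differentiableOn_snd)
  have hproj : DifferentiableOn ℂ (fun q : ℂ × ℂ => (x₀ q.2, q.2)) (Prod.snd ⁻¹' D) :=
    hx.prodMk differentiableOn_snd
  refine ⟨Ω ∩ ((Prod.snd ⁻¹' D ∩ (fun q : ℂ × ℂ => (q.1, x₀ q.2, q.2)) ⁻¹' U) ∩
    (Prod.snd ⁻¹' D ∩ (fun q : ℂ × ℂ => (x₀ q.2, q.2)) ⁻¹' Ω)),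
    fun q => S (q.1, x₀ q.2, q.2),
    hΩ.inter ((hlift.continuousOn.isOpen_inter_preimage hD' hU).inter
      (hproj.continuousOn.isOpen_inter_preimage hD' hΩ)),
    ⟨hyΩ, ⟨hy, hyU⟩, hy, hyΩ⟩, ?_, fun q hq => ?_⟩
  · exact (hS.mono hUW).comp (hlift.mono fun q hq => hq.2.1.1) fun q hq => hq.2.1.2
  · exact ⟨hq.1, hq.2.1.1, hq.2.2.2, hfS _ (hUW hq.2.1.2)⟩

theorem pdx_xiPole {Ω : Set (ℂ × ℂ)} (hΩ : IsOpen Ω) {x₀ r : ℂ → ℂ} {η : ℂ × ℂ → ℂ}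
    (hη : DifferentiableOn ℂ η Ω) {x y : ℂ} (hq : (x, y) ∈ Ω) (hne : x ≠ x₀ y) :
    pdx (xiPole x₀ r η) (x, y) = -r y / (x - x₀ y) ^ 2 + pdx η (x, y) := by
  have hslice : HasDerivAt (fun x => η (x, y)) (pdx η (x, y)) x :=
    (DifferentiableAt.comp x (hη.differentiableAt (hΩ.mem_nhds hq))
      (by fun_prop : DifferentiableAt ℂ (fun x : ℂ => (x, y)) x)).hasDerivAt
  have h := ((hasDerivAt_const x (r y)).div ((hasDerivAt_id x).sub_const (x₀ y))
    (sub_ne_zero.2 hne)).add hslice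
  refine h.deriv.trans ?_
  simp

theorem pdx_pdx_xiPole {Ω : Set (ℂ × ℂ)} (hΩ : IsOpen Ω) {x₀ r : ℂ → ℂ} {η : ℂ × ℂ → ℂ}
    (hη : DifferentiableOn ℂ η Ω) {x y : ℂ} (hq : (x, y) ∈ Ω) (hne : x ≠ x₀ y) :
    pdx (pdx (xiPole x₀ r η)) (x, y) = 2 * r y / (x - x₀ y) ^ 3 + pdx (pdx η) (x, y) := by
  have hslice : HasDerivAt (fun x => pdx η (x, y)) (pdx (pdx η) (x, y)) x :=
    (DifferentiableAt.comp x ((differentiableOn_pdx hΩ hη).differentiableAt (hΩ.mem_nhds hq))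
      (by fun_prop : DifferentiableAt ℂ (fun x : ℂ => (x, y)) x)).hasDerivAt
  have hsub := sub_ne_zero.2 hne
  have h := ((hasDerivAt_const x (-r y)).div (((hasDerivAt_id x).sub_const (x₀ y)).pow 2)
    (pow_ne_zero 2 hsub)).add hslice
  have hcont : Continuous fun x : ℂ => (x, y) := by fun_prop
  have heq : (fun x => pdx (xiPole x₀ r η) (x, y)) =ᶠ[𝓝 x]
      fun x => -r y / (x - x₀ y) ^ 2 + pdx η (x, y) := by
    filter_upwards [hcont.continuousAt.eventually (hΩ.mem_nhds hq), isOpen_ne.mem_nhds hne]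
      with t ht htne
    exact pdx_xiPole hΩ hη ht htne
  refine (h.congr_of_eventuallyEq heq).deriv.trans ?_
  simp
  field_simp

theorem pdy_xiPole {Ω : Set (ℂ × ℂ)} (hΩ : IsOpen Ω) {x₀ r : ℂ → ℂ} {η : ℂ × ℂ → ℂ}
    (hη : DifferentiableOn ℂ η Ω) {x y : ℂ} (hx₀ : DifferentiableAt ℂ x₀ y)
    (hr : DifferentiableAt ℂ r y) (hq : (x, y) ∈ Ω) (hne : x ≠ x₀ y) :
    pdy (xiPole x₀ r η) (x, y) =
      deriv r y / (x - x₀ y) + r y * deriv x₀ y / (x - x₀ y) ^ 2 + pdy η (x, y) := by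
  have hslice : HasDerivAt (fun y => η (x, y)) (pdy η (x, y)) y :=
    (DifferentiableAt.comp y (hη.differentiableAt (hΩ.mem_nhds hq))
      (by fun_prop : DifferentiableAt ℂ (fun y : ℂ => (x, y)) y)).hasDerivAt
  have hsub := sub_ne_zero.2 hne
  have h := (hr.hasDerivAt.div (hx₀.hasDerivAt.const_sub x) hsub).add hslice
  refine h.deriv.trans ?_
  field_simp
  ring

/-- Laurent computation in Lemma 3.3 of the paper: for
`ξ = r(y)/(x−x₀(y)) + η` and `u = 2/(x−x₀(y))² + ũ`, the function
`F − (r x₀' + 2η(x₀,y))/(x−x₀)² − (r' + (ũ(x₀,y)+b)r + 2∂_xη(x₀,y))/(x−x₀)`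
extends holomorphically across x = x₀(y): F has at most a double pole, with
the indicated double-pole coefficient and residue. -/
theorem stmt_9 (D : Set ℂ) (hD : IsOpen D)
    (x₀ r : ℂ → ℂ) (hx₀ : DifferentiableOn ℂ x₀ D) (hr : DifferentiableOn ℂ r D)
    (Ω : Set (ℂ × ℂ)) (hΩ : IsOpen Ω)
    (hgraph : ∀ y ∈ D, ((x₀ y, y) : ℂ × ℂ) ∈ Ω)
    (η ut : ℂ × ℂ → ℂ)
    (hη : DifferentiableOn ℂ η Ω) (hut : DifferentiableOn ℂ ut Ω)
    (b : ℂ) :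
    ∀ y ∈ D, ∃ (V : Set (ℂ × ℂ)) (G : ℂ × ℂ → ℂ),
      V ∈ nhds ((x₀ y, y) : ℂ × ℂ) ∧
      (∀ q ∈ V, q ∈ Ω ∧ q.2 ∈ D) ∧
      DifferentiableOn ℂ G V ∧
      ∀ q ∈ V, q.1 ≠ x₀ q.2 →
        G q = Frec x₀ r η ut b q
          - (r q.2 * deriv x₀ q.2 + 2 * η (x₀ q.2, q.2)) / (q.1 - x₀ q.2) ^ 2
          - (deriv r q.2 + (ut (x₀ q.2, q.2) + b) * r q.2
              + 2 * pdx η (x₀ q.2, q.2)) / (q.1 - x₀ q.2) := by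
  intro y hy
  obtain ⟨V₁, S₁, hV₁, hyV₁, hS₁, hηS₁⟩ :=
    exists_dividedDifference_graph hΩ hη hD hx₀ hy (hgraph y hy)
  obtain ⟨V₂, S₂, hV₂, hyV₂, hS₂, hS₁S₂⟩ :=
    exists_dividedDifference_graph hV₁ hS₁ hD hx₀ hy hyV₁
  obtain ⟨W, T, hW, hyW, hT, hutT⟩ :=
    exists_dividedDifference_graph hΩ hut hD hx₀ hy (hgraph y hy)
  have hVΩ : V₂ ∩ W ⊆ Ω := fun q hq => (hutT q hq.2).1
  have hVD : ∀ q ∈ V₂ ∩ W, q.2 ∈ D := fun q hq => (hutT q hq.2).2.1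
  refine ⟨V₂ ∩ W, fun q => pdy η q + (ut q + b) * η q - pdx (pdx η) q + 2 * S₂ q + r q.2 * T q,
    (hV₂.inter hW).mem_nhds ⟨hyV₂, hyW⟩, fun q hq => ⟨hVΩ hq, hVD q hq⟩, ?_, ?_⟩
  · have hr' : DifferentiableOn ℂ (fun q : ℂ × ℂ => r q.2) (V₂ ∩ W) :=
      hr.comp differentiableOn_snd hVD
    exact (((((differentiableOn_pdy hΩ hη).mono hVΩ).add
      (((hut.mono hVΩ).add_const b).mul (hη.mono hVΩ))).sub
      ((differentiableOn_pdx hΩ (differentiableOn_pdx hΩ hη)).mono hVΩ)).add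
      ((hS₂.mono inter_subset_left).const_mul 2)).add (hr'.mul (hT.mono inter_subset_right))
  · rintro ⟨x, t⟩ hq hne
    have hqΩ := hVΩ hq
    have htD : t ∈ D := hVD _ hq
    obtain ⟨hqV₁, -, hgV₁, hS⟩ := hS₁S₂ _ hq.1
    obtain ⟨-, -, -, hη₁⟩ := hηS₁ _ hqV₁
    obtain ⟨-, -, -, hu⟩ := hutT _ hq.2
    have hres : pdx η (x₀ t, t) = S₁ (x₀ t, t) := by
      refine pdx_eq_of_sub_eq_mul (hS₁.differentiableAt (hV₁.mem_nhds hgV₁)) ?_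
      have hcont : Continuous fun x : ℂ => (x, t) := by fun_prop
      filter_upwards [hcont.continuousAt.eventually (hV₁.mem_nhds hgV₁)] with z hz
      exact (hηS₁ _ hz).2.2.2
    simp only at hne hS hη₁ hu ⊢
    have hsub := sub_ne_zero.2 hne
    simp only [Frec, pdy_xiPole hΩ hη (hx₀.differentiableAt (hD.mem_nhds htD))
      (hr.differentiableAt (hD.mem_nhds htD)) hqΩ hne, pdx_pdx_xiPole hΩ hη hqΩ hne, hres,
      xiPole, uPole]
    have e₁ : η (x₀ t, t) = η (x, t) - (x - x₀ t) * S₁ (x, t) := by linear_combination -hη₁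
    have e₂ : S₁ (x₀ t, t) = S₁ (x, t) - (x - x₀ t) * S₂ (x, t) := by linear_combination -hS
    have e₃ : ut (x₀ t, t) = ut (x, t) - (x - x₀ t) * T (x, t) := by linear_combination -hu
    rw [e₁, e₂, e₃]
    field_simp
    ring
end

section
/- Let D ⊆ ℂ be open and let x, v, w, r, ρ₀, ρ₁ : D → ℂ be holomorphic (x twice differentiable, r and ρ₀ differentiable) functions of y. Define R(y) := −(x'(y) r(y) + 2ρ₀(y))/2 and R₁(y) := (ρ₀'(y) − x'(y)ρ₁(y) + w(y) r(y) + v(y) ρ₀(y))/2. Then R' + vR + 2R₁ = −(r/2)(x'' − 2w) − (x'/2)(r' + v r + 2ρ₁) identically on D. In particular, if x'' = 2w and r' + v r + 2ρ₁ = 0 on D, then R' + vR + 2R₁ = 0 on D. -/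
/-- induction step in Lemma 3.3 of the paper: with
`R = −(x' r + 2ρ₀)/2` and `R₁ = (ρ₀' − x' ρ₁ + w r + v ρ₀)/2` one has the identity
`R' + vR + 2R₁ = −(r/2)(x'' − 2w) − (x'/2)(r' + v r + 2ρ₁)`; in particular, if
`x'' = 2w` and `r' + v r + 2ρ₁ = 0` on D, then `R' + vR + 2R₁ = 0` on D. -/
theorem stmt_10 (D : Set ℂ) (hD : IsOpen D)
    (x v w r ρ₀ ρ₁ : ℂ → ℂ)
    (hx : DifferentiableOn ℂ x D) (hx' : DifferentiableOn ℂ (deriv x) D)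
    (hv : DifferentiableOn ℂ v D) (hw : DifferentiableOn ℂ w D)
    (hr : DifferentiableOn ℂ r D) (hρ₀ : DifferentiableOn ℂ ρ₀ D)
    (hρ₁ : DifferentiableOn ℂ ρ₁ D) :
    (∀ y ∈ D,
      deriv (fun y' => -(deriv x y' * r y' + 2 * ρ₀ y') / 2) y
        + v y * (-(deriv x y * r y + 2 * ρ₀ y) / 2)
        + 2 * ((deriv ρ₀ y - deriv x y * ρ₁ y + w y * r y + v y * ρ₀ y) / 2)
      = -(r y / 2) * (deriv (deriv x) y - 2 * w y)
        - (deriv x y / 2) * (deriv r y + v y * r y + 2 * ρ₁ y)) ∧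
    ((∀ y ∈ D, deriv (deriv x) y = 2 * w y) →
     (∀ y ∈ D, deriv r y + v y * r y + 2 * ρ₁ y = 0) →
     ∀ y ∈ D,
      deriv (fun y' => -(deriv x y' * r y' + 2 * ρ₀ y') / 2) y
        + v y * (-(deriv x y * r y + 2 * ρ₀ y) / 2)
        + 2 * ((deriv ρ₀ y - deriv x y * ρ₁ y + w y * r y + v y * ρ₀ y) / 2)
      = 0) := by
  have residue_identity : ∀ y ∈ D,
      deriv (fun y' => -(deriv x y' * r y' + 2 * ρ₀ y') / 2) y
        + v y * (-(deriv x y * r y + 2 * ρ₀ y) / 2)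
        + 2 * ((deriv ρ₀ y - deriv x y * ρ₁ y + w y * r y + v y * ρ₀ y) / 2)
      = -(r y / 2) * (deriv (deriv x) y - 2 * w y)
        - (deriv x y / 2) * (deriv r y + v y * r y + 2 * ρ₁ y) := by
    intro y hy
    have hDy : D ∈ nhds y := hD.mem_nhds hy
    have hx'y := (hx'.differentiableAt hDy).hasDerivAt
    have hry := (hr.differentiableAt hDy).hasDerivAt
    have hρ₀y := (hρ₀.differentiableAt hDy).hasDerivAt
    have hR : HasDerivAt (fun y' => -(deriv x y' * r y' + 2 * ρ₀ y') / 2)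
        (-(deriv (deriv x) y * r y + deriv x y * deriv r y + 2 * deriv ρ₀ y) / 2) y :=
      ((hx'y.mul hry).add (hρ₀y.const_mul 2)).neg.div_const 2
    rw [hR.deriv]
    ring
  refine ⟨residue_identity, fun hmotion hres y hy => ?_⟩
  rw [residue_identity y hy, hmotion y hy, hres y hy]
  ring
end

section
/- Let U ⊆ ℂ be open, let σ : U → ℂ be holomorphic, and let g₂ ∈ ℂ satisfy 2σ''''σ − 8σ'''σ' + 6(σ'')² = g₂σ² on U. Fix α, β ∈ ℂ and z ∈ ℂ, and define τ(x,y,t) := e^{αxt + βy²}σ(x+z) for x + z ∈ U and (y,t) ∈ ℂ². Then (D_x⁴ − 4D_xD_t + 3D_y²)τ·τ = (g₂ − 8α + 12β)·e^{2(αxt+βy²)}·σ(x+z)². Consequently, τ satisfies the bilinear KP equation (D_x⁴ − 4D_xD_t + 3D_y²)τ·τ = 0 identically if and only if (g₂ + 12β − 8α)·σ(x+z)² = 0 for all admissible x. -/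
/-- Partial derivative in the first (x) variable of a function on ℂ³. -/
noncomputable def pd1 (f : ℂ × ℂ × ℂ → ℂ) : ℂ × ℂ × ℂ → ℂ :=
  fun q => deriv (fun x => f (x, q.2.1, q.2.2)) q.1

/-- Partial derivative in the second (y) variable of a function on ℂ³. -/
noncomputable def pd2 (f : ℂ × ℂ × ℂ → ℂ) : ℂ × ℂ × ℂ → ℂ :=
  fun q => deriv (fun y => f (q.1, y, q.2.2)) q.2.1

/-- Partial derivative in the third (t) variable of a function on ℂ³. -/
noncomputable def pd3 (f : ℂ × ℂ × ℂ → ℂ) : ℂ × ℂ × ℂ → ℂ :=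
  fun q => deriv (fun t => f (q.1, q.2.1, t)) q.2.2

/-- Hirota's bilinear operator
`D_x⁴ f·g = f_xxxx g − 4 f_xxx g_x + 6 f_xx g_xx − 4 f_x g_xxx + f g_xxxx`. -/
noncomputable def Dx4 (f g : ℂ × ℂ × ℂ → ℂ) : ℂ × ℂ × ℂ → ℂ :=
  fun q => pd1 (pd1 (pd1 (pd1 f))) q * g q - 4 * pd1 (pd1 (pd1 f)) q * pd1 g q
    + 6 * pd1 (pd1 f) q * pd1 (pd1 g) q - 4 * pd1 f q * pd1 (pd1 (pd1 g)) q
    + f q * pd1 (pd1 (pd1 (pd1 g))) q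

/-- Hirota's bilinear operator `D_xD_t f·g = f_xt g − f_x g_t − f_t g_x + f g_xt`. -/
noncomputable def DxDt (f g : ℂ × ℂ × ℂ → ℂ) : ℂ × ℂ × ℂ → ℂ :=
  fun q => pd1 (pd3 f) q * g q - pd1 f q * pd3 g q - pd3 f q * pd1 g q
    + f q * pd1 (pd3 g) q

/-- Hirota's bilinear operator `D_y² f·g = f_yy g − 2 f_y g_y + f g_yy`. -/
noncomputable def Dy2 (f g : ℂ × ℂ × ℂ → ℂ) : ℂ × ℂ × ℂ → ℂ :=
  fun q => pd2 (pd2 f) q * g q - 2 * pd2 f q * pd2 g q + f q * pd2 (pd2 g) q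

/-- The tau function `τ(x,y,t) = e^{αxt + βy²} σ(x+z)`. -/
noncomputable def tauKP (α β z : ℂ) (σ : ℂ → ℂ) : ℂ × ℂ × ℂ → ℂ :=
  fun q => Complex.exp (α * q.1 * q.2.2 + β * q.2.1 ^ 2) * σ (q.1 + z)

/-- The `x`-derivative of `e^{αxt+βy²} h(x+z)` along a line with `y`, `t` fixed. -/
theorem pd1_exp_mul {U : Set ℂ} (hU : IsOpen U) {α β z y t : ℂ} {f : ℂ × ℂ × ℂ → ℂ}
    {h h' : ℂ → ℂ} (hh : ∀ w ∈ U, HasDerivAt h (h' w) w)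
    (hf : ∀ x, x + z ∈ U → f (x, y, t) = Complex.exp (α * x * t + β * y ^ 2) * h (x + z))
    (x : ℂ) (hx : x + z ∈ U) :
    pd1 f (x, y, t)
      = Complex.exp (α * x * t + β * y ^ 2) * (α * t * h (x + z) + h' (x + z)) := by
  have hev : (fun x => f (x, y, t)) =ᶠ[nhds x]
      fun x => Complex.exp (α * x * t + β * y ^ 2) * h (x + z) := by
    have hopen : IsOpen {x : ℂ | x + z ∈ U} := hU.preimage (by fun_prop)
    filter_upwards [hopen.mem_nhds hx] with x' hx' using hf x' hx'
  have hE : HasDerivAt (fun x => α * x * t + β * y ^ 2) (α * 1 * t) x :=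
    (((hasDerivAt_id x).const_mul α).mul_const t).add_const _
  have hs : HasDerivAt (fun x => h (x + z)) (h' (x + z)) x := (hh _ hx).comp_add_const x z
  change deriv (fun x => f (x, y, t)) x = _
  rw [hev.deriv_eq, (hE.cexp.fun_mul hs).deriv]
  ring

theorem pd3_tauKP (α β z : ℂ) (σ : ℂ → ℂ) (x y t : ℂ) :
    pd3 (tauKP α β z σ) (x, y, t)
      = Complex.exp (α * x * t + β * y ^ 2) * (α * x * σ (x + z)) := by
  have hE : HasDerivAt (fun t => α * x * t + β * y ^ 2) (α * x * 1) t :=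
    ((hasDerivAt_id t).const_mul (α * x)).add_const _
  change deriv (fun t => Complex.exp (α * x * t + β * y ^ 2) * σ (x + z)) t = _
  rw [(hE.cexp.mul_const _).deriv]
  ring

theorem hasDerivAt_exp_quadratic (a β y : ℂ) :
    HasDerivAt (fun y => Complex.exp (a + β * y ^ 2))
      (Complex.exp (a + β * y ^ 2) * (2 * β * y)) y := by
  have hE : HasDerivAt (fun y : ℂ => a + β * y ^ 2) (2 * β * y) y := by
    refine (((hasDerivAt_pow 2 y).const_mul β).const_add a).congr_deriv ?_
    push_cast
    ring
  exact hE.cexp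

theorem pd2_tauKP (α β z : ℂ) (σ : ℂ → ℂ) (q : ℂ × ℂ × ℂ) :
    pd2 (tauKP α β z σ) q
      = Complex.exp (α * q.1 * q.2.2 + β * q.2.1 ^ 2) * (2 * β * q.2.1) * σ (q.1 + z) :=
  ((hasDerivAt_exp_quadratic (α * q.1 * q.2.2) β q.2.1).mul_const (σ (q.1 + z))).deriv

theorem pd2_pd2_tauKP (α β z : ℂ) (σ : ℂ → ℂ) (x y t : ℂ) :
    pd2 (pd2 (tauKP α β z σ)) (x, y, t)
      = Complex.exp (α * x * t + β * y ^ 2) * (2 * β + (2 * β * y) ^ 2) * σ (x + z) := by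
  rw [funext (pd2_tauKP α β z σ)]
  have hl : HasDerivAt (fun y => 2 * β * y) (2 * β * 1) y := (hasDerivAt_id y).const_mul _
  refine (((hasDerivAt_exp_quadratic (α * x * t) β y).mul hl).mul_const (σ (x + z))).deriv.trans ?_
  ring

/-- equation (1.14) of the paper: if σ satisfies
`2σ''''σ − 8σ'''σ' + 6(σ'')² = g₂σ²` on an open set U, then for
`τ = e^{αxt+βy²}σ(x+z)` one has
`(D_x⁴ − 4D_xD_t + 3D_y²)τ·τ = (g₂ − 8α + 12β) e^{2(αxt+βy²)} σ(x+z)²`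
whenever x + z ∈ U; consequently τ satisfies the bilinear KP equation
identically iff `(g₂ + 12β − 8α) σ(x+z)² = 0` for all admissible x. -/
theorem stmt_13 (U : Set ℂ) (hU : IsOpen U)
    (σ : ℂ → ℂ) (hσ : DifferentiableOn ℂ σ U) (g₂ : ℂ)
    (hσ4 : ∀ w ∈ U,
      2 * deriv (deriv (deriv (deriv σ))) w * σ w
        - 8 * deriv (deriv (deriv σ)) w * deriv σ w
        + 6 * (deriv (deriv σ) w) ^ 2
      = g₂ * (σ w) ^ 2)
    (α β z : ℂ) :
    (∀ x y t : ℂ, x + z ∈ U →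
      Dx4 (tauKP α β z σ) (tauKP α β z σ) (x, y, t)
        - 4 * DxDt (tauKP α β z σ) (tauKP α β z σ) (x, y, t)
        + 3 * Dy2 (tauKP α β z σ) (tauKP α β z σ) (x, y, t)
      = (g₂ - 8 * α + 12 * β) * Complex.exp (2 * (α * x * t + β * y ^ 2))
          * (σ (x + z)) ^ 2) ∧
    ((∀ x y t : ℂ, x + z ∈ U →
        Dx4 (tauKP α β z σ) (tauKP α β z σ) (x, y, t)
          - 4 * DxDt (tauKP α β z σ) (tauKP α β z σ) (x, y, t)
          + 3 * Dy2 (tauKP α β z σ) (tauKP α β z σ) (x, y, t) = 0)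
      ↔ (∀ x : ℂ, x + z ∈ U → (g₂ + 12 * β - 8 * α) * (σ (x + z)) ^ 2 = 0)) := by
  have hd : ∀ {f : ℂ → ℂ}, DifferentiableOn ℂ f U → ∀ w ∈ U, HasDerivAt f (deriv f w) w :=
    fun hf w hw => (hf.differentiableAt (hU.mem_nhds hw)).hasDerivAt
  have h0 := hd hσ
  have h1 := hd (hσ.deriv hU)
  have h2 := hd ((hσ.deriv hU).deriv hU)
  have h3 := hd (((hσ.deriv hU).deriv hU).deriv hU)
  have main : ∀ x y t : ℂ, x + z ∈ U →
      Dx4 (tauKP α β z σ) (tauKP α β z σ) (x, y, t)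
        - 4 * DxDt (tauKP α β z σ) (tauKP α β z σ) (x, y, t)
        + 3 * Dy2 (tauKP α β z σ) (tauKP α β z σ) (x, y, t)
      = (g₂ - 8 * α + 12 * β) * Complex.exp (2 * (α * x * t + β * y ^ 2))
          * (σ (x + z)) ^ 2 := by
    intro x y t hx
    have e0 : ∀ x, tauKP α β z σ (x, y, t)
        = Complex.exp (α * x * t + β * y ^ 2) * σ (x + z) := fun _ => rfl
    have d1 : ∀ w ∈ U, HasDerivAt (fun w => α * t * σ w + deriv σ w)
        (α * t * deriv σ w + deriv (deriv σ) w) w :=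
      fun w hw => ((h0 w hw).const_mul _).fun_add (h1 w hw)
    have d1' : ∀ w ∈ U, HasDerivAt (fun w => α * t * deriv σ w + deriv (deriv σ) w)
        (α * t * deriv (deriv σ) w + deriv (deriv (deriv σ)) w) w :=
      fun w hw => ((h1 w hw).const_mul _).fun_add (h2 w hw)
    have d1'' : ∀ w ∈ U,
        HasDerivAt (fun w => α * t * deriv (deriv σ) w + deriv (deriv (deriv σ)) w)
          (α * t * deriv (deriv (deriv σ)) w + deriv (deriv (deriv (deriv σ))) w) w :=
      fun w hw => ((h2 w hw).const_mul _).fun_add (h3 w hw)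
    have d2 := fun w hw => ((d1 w hw).const_mul (α * t)).fun_add (d1' w hw)
    have d2' := fun w hw => ((d1' w hw).const_mul (α * t)).fun_add (d1'' w hw)
    have d3 := fun w hw => ((d2 w hw).const_mul (α * t)).fun_add (d2' w hw)
    have e1 := pd1_exp_mul hU h0 fun x _ => e0 x
    have e2 := pd1_exp_mul hU d1 e1
    have e3 := pd1_exp_mul hU d2 e2
    have e4 := pd1_exp_mul hU d3 e3
    have dt : ∀ w ∈ U, HasDerivAt (fun w => α * (w - z) * σ w)
        (α * 1 * σ w + α * (w - z) * deriv σ w) w := fun w hw =>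
      (((hasDerivAt_id w).sub_const z).const_mul α).mul (h0 w hw)
    have et := pd1_exp_mul hU (f := pd3 (tauKP α β z σ)) (α := α) (β := β) (y := y) (t := t) dt
      (fun x _ => by rw [pd3_tauKP, add_sub_cancel_right])
    have hexp : Complex.exp (2 * (α * x * t + β * y ^ 2))
        = Complex.exp (α * x * t + β * y ^ 2) ^ 2 := by
      rw [← Complex.exp_nat_mul]
      norm_num
    simp only [Dx4, DxDt, Dy2, e0, e1 x hx, e2 x hx, e3 x hx, e4 x hx, et x hx, pd3_tauKP,
      pd2_tauKP, pd2_pd2_tauKP, hexp, add_sub_cancel_right]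
    linear_combination Complex.exp (α * x * t + β * y ^ 2) ^ 2 * hσ4 _ hx
  refine ⟨main, fun h x hx => ?_, fun h x y t hx => ?_⟩
  · have h' := (main x 0 0 hx).symm.trans (h x 0 0 hx)
    simp only [mul_zero, ne_eq, OfNat.ofNat_ne_zero, not_false_eq_true, zero_pow, add_zero,
      Complex.exp_zero, mul_one] at h'
    linear_combination h'
  · rw [main x y t hx]
    linear_combination Complex.exp (2 * (α * x * t + β * y ^ 2)) * h x hx
end
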